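/- arXiv:2506.15356 — 2 statements merged into one kernel-verified Lean document; each statement's English description precedes it below -/
import Mathlib

section
/- Hölder-in-δ bound for the boundary trace of E_x: Let T > 0 and let s : [0,T] → ℝ satisfy |s(t) − s(τ)| ≤ |t − τ|^β for all t, τ ∈ [0,T], for some β > α_m/2. Then there exists a constant C > 0 (independent of t and δ) such that for all t ∈ (0,T] and all δ ∈ (0,t), ∫_{t−δ}^{t} |E_x(s(t) − s(τ), t − τ)| dτ ≤ C δ^{β − α_m/2}. -/
open MeasureTheory Real Filter Set Topology intervalIntegral

/-- The Wright function `W(z; -β, δ) = ∑ z^k/(k! Γ(δ - βk))`, with `1/Γ` the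
entire reciprocal Gamma function (here `Real.Gamma` vanishes at nonpositive
integers, so division gives the correct value `0`). -/
noncomputable def wrightW (β δ z : ℝ) : ℝ :=
  ∑' k : ℕ, z ^ k / (k.factorial * Real.Gamma (δ - β * k))

/-- Laplace convolution on `(0, ∞)`. -/
noncomputable def laplaceConv (f g : ℝ → ℝ) : ℝ → ℝ :=
  fun t => ∫ τ in (0:ℝ)..t, f τ * g (t - τ)

/-- Iterated Laplace convolution `h₀ ∗ h₁ ∗ ⋯ ∗ hₙ`. -/
noncomputable def iterConv : (n : ℕ) → (Fin (n + 1) → ℝ → ℝ) → ℝ → ℝ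
  | 0, h => h 0
  | n + 1, h => laplaceConv (iterConv n (fun i => h i.castSucc)) (h (Fin.last (n + 1)))

/-- `S^μ_m(t; -ℓ₁, …, -ℓ_m; -α₁, …, -α_m)` with the decomposition `μ₁ = μ`,
`μ_j = 0` for `j ≥ 2`: the Laplace convolution of
`h_j(t) = t^{μ_j - 1} W(-ℓ_j t^{-α_j}; -α_j, μ_j)`.  Indices run over
`Fin (n+1)`, i.e. the number of terms is `m = n + 1 ≥ 1`. -/
noncomputable def Sconv (n : ℕ) (μ : ℝ) (α ℓ : Fin (n + 1) → ℝ) : ℝ → ℝ :=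
  iterConv n (fun j t =>
    t ^ ((if j = 0 then μ else 0) - 1) *
      wrightW (α j) (if j = 0 then μ else 0) (-(ℓ j) * t ^ (-(α j))))

/-- `Γ^μ₁(x,t)`. -/
noncomputable def Gam1 (n : ℕ) (α lam : Fin (n + 1) → ℝ) (μ x t : ℝ) : ℝ :=
  (4 * Real.pi) ^ (-(1/2 : ℝ)) *
    ∫ p in Set.Ioi (0:ℝ),
      p ^ (-(1/2 : ℝ)) * Real.exp (-(|x| ^ 2) / (4 * p)) *
        Sconv n μ α (fun j => lam j * p) t

/-- The kernel `E(x,t) = Γ⁰₁(x,t)`. -/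
noncomputable def kerE (n : ℕ) (α lam : Fin (n + 1) → ℝ) (x t : ℝ) : ℝ :=
  Gam1 n α lam 0 x t

/-- `E_x`, the spatial derivative of `E`. -/
noncomputable def kerEx (n : ℕ) (α lam : Fin (n + 1) → ℝ) (x t : ℝ) : ℝ :=
  deriv (fun y => kerE n α lam y t) x

/-- `E_xx`, the second spatial derivative of `E`. -/
noncomputable def kerExx (n : ℕ) (α lam : Fin (n + 1) → ℝ) (x t : ℝ) : ℝ :=
  deriv (fun y => kerEx n α lam y t) x

/-- The kernel `Z(x,t) = ∑ₖ λₖ Γ^{1-αₖ}₁(x,t)`. -/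
noncomputable def kerZ (n : ℕ) (α lam : Fin (n + 1) → ℝ) (x t : ℝ) : ℝ :=
  ∑ k : Fin (n + 1), lam k * Gam1 n α lam (1 - α k) x t

/-- `Z_x`, the spatial derivative of `Z`. -/
noncomputable def kerZx (n : ℕ) (α lam : Fin (n + 1) → ℝ) (x t : ℝ) : ℝ :=
  deriv (fun y => kerZ n α lam y t) x

/-- `Z_xx`, the second spatial derivative of `Z`. -/
noncomputable def kerZxx (n : ℕ) (α lam : Fin (n + 1) → ℝ) (x t : ℝ) : ℝ :=
  deriv (fun y => kerZx n α lam y t) x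

theorem inv_Gamma_neg_eq {x : ℝ} (hx : 0 ≤ x) :
    (Real.Gamma (-x))⁻¹ = -(Real.Gamma (1 + x) * Real.sin (π * x) / π) := by
  have h := congrArg (fun y : ℝ => y⁻¹) (Real.Gamma_mul_Gamma_one_sub (-x))
  simp only [mul_inv, sub_neg_eq_add, mul_neg, Real.sin_neg, inv_div] at h
  have hG : 0 < Real.Gamma (1 + x) := Real.Gamma_pos_of_pos (by linarith)
  field_simp at h ⊢
  linarith

theorem integral_rpow_mul_cexp_neg_mul_Ioi {s : ℝ} (hs : 0 ≤ s) {w : ℂ} (hw : 0 < w.re) :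
    ∫ u in Ioi (0:ℝ), ((u ^ s : ℝ) : ℂ) * Complex.exp (-(w * u)) =
      (1 / w) ^ ((s : ℂ) + 1) * Complex.Gamma (s + 1) := by
  have hopen : IsOpen {w : ℂ | 0 < w.re} := isOpen_lt continuous_const Complex.continuous_re
  have hcont (r : ℝ) (hr : 0 ≤ r) (w : ℂ) :
      Continuous fun u : ℝ => ((u ^ r : ℝ) : ℂ) * Complex.exp (-(w * u)) := by
    have := Real.continuous_rpow_const hr
    fun_prop
  have hnorm (r : ℝ) (w : ℂ) {u : ℝ} (hu : 0 < u) :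
      ‖((u ^ r : ℝ) : ℂ) * Complex.exp (-(w * u))‖ = u ^ r * Real.exp (-w.re * u ^ (1:ℝ)) := by
    rw [norm_mul, Complex.norm_exp, Complex.norm_real, Real.norm_of_nonneg (by positivity),
      Complex.neg_re, Complex.re_mul_ofReal, Real.rpow_one, neg_mul]
  have hL : DifferentiableOn ℂ
      (fun w : ℂ => ∫ u in Ioi (0:ℝ), ((u ^ s : ℝ) : ℂ) * Complex.exp (-(w * u)))
      {w | 0 < w.re} := by
    intro w (hw : 0 < w.re)
    refine DifferentiableAt.differentiableWithinAt (HasDerivAt.differentiableAt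
      (_root_.hasDerivAt_integral_of_dominated_loc_of_deriv_le (μ := volume.restrict (Ioi (0:ℝ)))
      (s := Metric.ball w (w.re / 2))
      (F := fun (w : ℂ) (u : ℝ) => ((u ^ s : ℝ) : ℂ) * Complex.exp (-(w * u)))
      (F' := fun (w : ℂ) (u : ℝ) => ((u ^ s : ℝ) : ℂ) * (Complex.exp (-(w * u)) * (-u)))
      (bound := fun u => u ^ (s + 1) * Real.exp (-(w.re / 2) * u ^ (1:ℝ)))
      (Metric.ball_mem_nhds _ (half_pos hw))
      (Eventually.of_forall fun w => (hcont s hs w).aestronglyMeasurable) ?_ ?_ ?_ ?_ ?_).2)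
    · refine Integrable.mono'
        (integrableOn_rpow_mul_exp_neg_mul_rpow (by linarith : -1 < s) one_pos hw)
        (hcont s hs w).aestronglyMeasurable ?_
      filter_upwards [ae_restrict_mem measurableSet_Ioi] with u hu
      rw [hnorm s w hu]
    · refine Continuous.aestronglyMeasurable ?_
      have := Real.continuous_rpow_const hs
      fun_prop
    · filter_upwards [ae_restrict_mem measurableSet_Ioi] with u (hu : 0 < u) v hv
      rw [← mul_assoc, norm_mul, hnorm s v hu, norm_neg, Complex.norm_real,
        Real.norm_of_nonneg hu.le, Real.rpow_add_one hu.ne', mul_right_comm]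
      gcongr
      have h1 : |(w - v).re| ≤ ‖w - v‖ := Complex.abs_re_le_norm _
      rw [Metric.mem_ball, dist_comm, dist_eq_norm] at hv
      have h2 := (abs_le.1 (h1.trans hv.le)).2
      rw [Complex.sub_re] at h2
      linarith
    · exact integrableOn_rpow_mul_exp_neg_mul_rpow (by linarith) one_pos (half_pos hw)
    · refine ae_of_all _ fun u v _ => ?_
      have h1 : HasDerivAt (fun w : ℂ => -(w * u)) (-(u : ℂ)) v := by
        simpa using ((hasDerivAt_id' v).mul_const (u : ℂ)).fun_neg
      exact h1.cexp.const_mul _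
  have hR : DifferentiableOn ℂ
      (fun w : ℂ => (1 / w) ^ ((s : ℂ) + 1) * Complex.Gamma (s + 1)) {w | 0 < w.re} := by
    intro w (hw : 0 < w.re)
    have hw0 : w ≠ 0 := by rintro rfl; simp at hw
    have hslit : 1 / w ∈ Complex.slitPlane := by
      left
      rw [one_div, Complex.inv_re]
      exact div_pos hw (Complex.normSq_pos.2 hw0)
    have h1 : DifferentiableAt ℂ (fun w : ℂ => 1 / w) w :=
      (differentiableAt_const 1).div differentiableAt_id hw0
    exact ((h1.cpow_const hslit).mul_const _).differentiableWithinAt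
  refine (hL.analyticOnNhd hopen).eqOn_of_preconnected_of_frequently_eq (hR.analyticOnNhd hopen)
    (convex_halfSpace_re_gt 0).isPreconnected (z₀ := 1) (by simp) ?_ hw
  have ht : Tendsto (fun r : ℝ => (r : ℂ)) (𝓝[≠] 1) (𝓝[≠] 1) := by
    refine tendsto_nhdsWithin_iff.2 ⟨?_, ?_⟩
    · exact (Complex.continuous_ofReal.tendsto' 1 1 (by simp)).mono_left nhdsWithin_le_nhds
    · filter_upwards [self_mem_nhdsWithin] with r hr
      simpa using hr
  refine ht.frequently (Eventually.frequently ?_)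
  filter_upwards [nhdsWithin_le_nhds (lt_mem_nhds (zero_lt_one (α := ℝ)))] with r hr
  rw [← Complex.integral_cpow_mul_exp_neg_mul_Ioi (by simp; linarith) hr]
  refine setIntegral_congr_fun measurableSet_Ioi fun u (hu : 0 < u) => ?_
  simp [Complex.ofReal_cpow hu.le]
theorem integrableOn_exp_mul_rpow_sub {a c : ℝ} (ha : 0 < a) (ha1 : a < 1) (hc : 0 < c) (z : ℝ) :
    IntegrableOn (fun u : ℝ => Real.exp (-(c * u)) * Real.exp (z * u ^ a)) (Ioi 0) := by
  refine integrable_of_isBigO_exp_neg (half_pos hc) ?_ ?_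
  · exact ((by fun_prop : Continuous fun u : ℝ => Real.exp (-(c * u))).mul
      (Real.continuous_exp.comp
        (continuous_const.mul (Real.continuous_rpow_const ha.le)))).continuousOn
  · refine Asymptotics.IsBigO.of_bound 1 ?_
    have h : Tendsto (fun u : ℝ => z * u ^ (-(1 - a))) atTop (𝓝 (z * 0)) :=
      (tendsto_rpow_neg_atTop (by linarith : 0 < 1 - a)).const_mul z
    rw [mul_zero] at h
    filter_upwards [h.eventually_le_const (half_pos hc), eventually_gt_atTop 0] with u hu hu0
    rw [← Real.exp_add, Real.norm_eq_abs, Real.norm_eq_abs, Real.abs_exp, Real.abs_exp, one_mul,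
      Real.exp_le_exp]
    have h2 : u ^ a = u ^ (-(1 - a)) * u := by
      rw [← Real.rpow_add_one hu0.ne']; congr 1; ring
    rw [h2]
    nlinarith

/-- The integrand of the integral representation of `wrightW a 0`, along a ray that has been
rotated by the angle `-(a * π / 2)`. -/
noncomputable def wrightIntegrand (a z u : ℝ) : ℂ :=
  Complex.exp (-(Complex.exp (-(a * π / 2 : ℝ) * Complex.I) * u)) *
    Complex.exp (-(z * u ^ a : ℝ) * Complex.exp ((a * (π - a * π / 2) : ℝ) * Complex.I))

theorem norm_wrightIntegrand (a z u : ℝ) :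
    ‖wrightIntegrand a z u‖ = Real.exp (-(Real.cos (a * π / 2) * u)) *
      Real.exp (-(Real.cos (a * (π - a * π / 2)) * (z * u ^ a))) := by
  rw [wrightIntegrand, norm_mul, Complex.norm_exp, Complex.norm_exp]
  congr 2
  · rw [Complex.neg_re, Complex.re_mul_ofReal, ← Complex.ofReal_neg,
      Complex.exp_ofReal_mul_I_re, Real.cos_neg]
  · rw [← Complex.ofReal_neg, Complex.re_ofReal_mul, Complex.exp_ofReal_mul_I_re]
    ring

theorem cos_ray_pos {a : ℝ} (ha : 0 < a) (ha1 : a < 1) : 0 < Real.cos (a * π / 2) := by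
  apply Real.cos_pos_of_mem_Ioo
  constructor <;> nlinarith [Real.pi_pos]

theorem cos_rotated_pos {a : ℝ} (ha : 0 < a) (ha1 : a < 1) :
    0 < Real.cos (a * (π - a * π / 2)) := by
  apply Real.cos_pos_of_mem_Ioo
  constructor
  · have : 0 < a * (1 - a / 2) * π := mul_pos (mul_pos ha (by linarith)) Real.pi_pos
    nlinarith [Real.pi_pos]
  · nlinarith [mul_pos (pow_pos (sub_pos.2 ha1) 2) Real.pi_pos]

theorem continuous_wrightIntegrand {a : ℝ} (ha : 0 < a) (z : ℝ) :
    Continuous (wrightIntegrand a z) := by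
  have h : Continuous fun u : ℝ => u ^ a := Real.continuous_rpow_const ha.le
  unfold wrightIntegrand
  fun_prop

theorem integrableOn_wrightIntegrand {a z : ℝ} (ha : 0 < a) (ha1 : a < 1) :
    IntegrableOn (wrightIntegrand a z) (Ioi 0) := by
  refine Integrable.mono' (integrableOn_exp_mul_rpow_sub ha ha1 (cos_ray_pos ha ha1)
    (-(Real.cos (a * (π - a * π / 2)) * z)))
    (continuous_wrightIntegrand ha z).aestronglyMeasurable (ae_of_all _ fun u => ?_)
  rw [norm_wrightIntegrand]
  apply le_of_eq
  congr 2
  ring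

/-- The `k`-th term of the power series expansion in `z` of `wrightIntegrand a z u`. -/
noncomputable def wrightIntegrandTerm (a z u : ℝ) (k : ℕ) : ℂ :=
  Complex.exp (-(Complex.exp (-(a * π / 2 : ℝ) * Complex.I) * u)) *
    ((-(z * u ^ a : ℝ) * Complex.exp ((a * (π - a * π / 2) : ℝ) * Complex.I)) ^ k / k.factorial)

theorem wrightW_term_eq {a : ℝ} (ha : 0 < a) (ha1 : a < 1) (z : ℝ) (k : ℕ) :
    (-z) ^ k / (k.factorial * Real.Gamma (0 - a * k)) =
      -(1 / π) * (Complex.exp (-(a * π / 2 : ℝ) * Complex.I) *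
        ∫ u in Ioi (0:ℝ), wrightIntegrandTerm a z u k).im := by
  have hak : 0 ≤ a * k := by positivity
  set θ : ℝ := a * π / 2 with hθ
  set w : ℂ := Complex.exp (-θ * Complex.I) with hw
  have hwre : 0 < w.re := by
    rw [hw, ← Complex.ofReal_neg, Complex.exp_ofReal_mul_I_re, Real.cos_neg]
    exact cos_ray_pos ha ha1
  have hwinv : 1 / w = Complex.exp (θ * Complex.I) := by
    rw [hw, one_div, ← Complex.exp_neg]; congr 1; ring
  have hint : ∫ u in Ioi (0:ℝ), wrightIntegrandTerm a z u k =
      ((-z) ^ k / k.factorial : ℝ) * Complex.exp ((a * (π - θ) : ℝ) * Complex.I) ^ k *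
        ((1 / w) ^ (((a * k : ℝ) : ℂ) + 1) * Complex.Gamma ((a * k : ℝ) + 1)) := by
    rw [← integral_rpow_mul_cexp_neg_mul_Ioi hak hwre, ← MeasureTheory.integral_const_mul]
    refine setIntegral_congr_fun measurableSet_Ioi fun u (hu : 0 < u) => ?_
    simp only [wrightIntegrandTerm, ← hθ, ← hw]
    rw [Real.rpow_mul hu.le, Real.rpow_natCast, ← neg_mul, mul_pow]
    push_cast
    ring
  have hpow : (1 / w) ^ (((a * k : ℝ) : ℂ) + 1) =
      Complex.exp ((θ * (a * k + 1) : ℝ) * Complex.I) := by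
    rw [hwinv, Complex.cpow_def_of_ne_zero (Complex.exp_ne_zero _), Complex.log_exp]
    · congr 1
      push_cast
      ring
    · simp; nlinarith [Real.pi_pos]
    · simp; nlinarith [Real.pi_pos]
  have hG : Complex.Gamma ((a * k : ℝ) + 1) = (Real.Gamma (1 + a * k) : ℂ) := by
    rw [← Complex.Gamma_ofReal]; congr 1; push_cast; ring
  rw [hint, hpow, hG]
  have hcomb : w * (((-z) ^ k / k.factorial : ℝ) *
      Complex.exp ((a * (π - θ) : ℝ) * Complex.I) ^ k *
        (Complex.exp ((θ * (a * k + 1) : ℝ) * Complex.I) * (Real.Gamma (1 + a * k) : ℂ))) =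
      ((-z) ^ k / k.factorial * Real.Gamma (1 + a * k) : ℝ) *
        Complex.exp ((π * (a * k) : ℝ) * Complex.I) := by
    have : Complex.exp ((π * (a * k) : ℝ) * Complex.I) =
        w * Complex.exp ((a * (π - θ) : ℝ) * Complex.I) ^ k *
          Complex.exp ((θ * (a * k + 1) : ℝ) * Complex.I) := by
      rw [hw, ← Complex.exp_nat_mul, ← Complex.exp_add, ← Complex.exp_add]
      congr 1
      push_cast
      ring
    rw [this]
    push_cast
    ring
  rw [hcomb, Complex.im_ofReal_mul, Complex.exp_ofReal_mul_I_im, zero_sub, div_mul_eq_div_div,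
    div_eq_mul_inv _ (Real.Gamma _), inv_Gamma_neg_eq hak]
  ring

theorem norm_wrightIntegrandTerm (a z u : ℝ) (k : ℕ) :
    ‖wrightIntegrandTerm a z u k‖ =
      Real.exp (-(Real.cos (a * π / 2) * u)) * (|z * u ^ a| ^ k / k.factorial) := by
  rw [wrightIntegrandTerm, norm_mul, norm_div, norm_pow, norm_mul, Complex.norm_exp_ofReal_mul_I,
    norm_neg, Complex.norm_real, mul_one, Complex.norm_natCast, Real.norm_eq_abs, Complex.norm_exp,
    Complex.neg_re, Complex.re_mul_ofReal, ← Complex.ofReal_neg, Complex.exp_ofReal_mul_I_re,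
    Real.cos_neg]

theorem wrightW_eq_integral {a : ℝ} (ha : 0 < a) (ha1 : a < 1) (z : ℝ) :
    wrightW a 0 (-z) = -(1 / π) * (Complex.exp (-(a * π / 2 : ℝ) * Complex.I) *
        ∫ u in Ioi (0:ℝ), wrightIntegrand a z u).im := by
  have hsum (u : ℝ) : HasSum (fun k : ℕ => |z * u ^ a| ^ k / (k.factorial : ℝ))
      (Real.exp |z * u ^ a|) := by
    rw [Real.exp_eq_exp_ℝ]; exact NormedSpace.expSeries_div_hasSum_exp _
  have hcont : Continuous fun u : ℝ => u ^ a := Real.continuous_rpow_const ha.le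
  have h := hasSum_integral_of_dominated_convergence (μ := volume.restrict (Ioi (0:ℝ)))
    (F := fun k u => wrightIntegrandTerm a z u k) (f := wrightIntegrand a z)
    (fun k u => Real.exp (-(Real.cos (a * π / 2) * u)) * (|z * u ^ a| ^ k / k.factorial))
    (fun k => Continuous.aestronglyMeasurable (by unfold wrightIntegrandTerm; fun_prop))
    (fun k => ae_of_all _ fun u => (norm_wrightIntegrandTerm a z u k).le)
    (ae_of_all _ fun u => (hsum u).summable.mul_left _) ?_ (ae_of_all _ fun u => ?_)
  · rw [wrightW, tsum_congr (wrightW_term_eq ha ha1 z)]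
    refine HasSum.tsum_eq (HasSum.mul_left _ ?_)
    exact Complex.hasSum_im (h.mul_left _)
  · refine (integrableOn_exp_mul_rpow_sub ha ha1 (cos_ray_pos ha ha1) |z|).congr_fun
      (fun u (hu : 0 < u) => ?_) measurableSet_Ioi
    simp only [((hsum u).mul_left _).tsum_eq]
    rw [abs_mul, abs_of_nonneg (Real.rpow_nonneg hu.le a)]
  · refine HasSum.mul_left _ ?_
    rw [Complex.exp_eq_exp_ℂ]
    exact NormedSpace.expSeries_div_hasSum_exp _

theorem wrightW_zero_zero (a : ℝ) : wrightW a 0 0 = 0 := by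
  rw [wrightW, tsum_eq_single 0]
  · simp [Real.Gamma_zero]
  · intro k hk
    simp [hk]

theorem abs_wrightW_le {a : ℝ} (ha : 0 < a) (ha1 : a < 1) :
    ∃ A > 0, ∀ z > 0, |wrightW a 0 (-z)| ≤ A * (z / (1 + z ^ 2)) := by
  have hc := cos_ray_pos ha ha1
  have hd := cos_rotated_pos ha ha1
  set c := Real.cos (a * π / 2) with hc_def
  set d := Real.cos (a * (π - a * π / 2)) with hd_def
  have hint (s : ℝ) (hs : -1 < s) :
      IntegrableOn (fun u : ℝ => u ^ s * Real.exp (-c * u ^ (1:ℝ))) (Ioi 0) :=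
    integrableOn_rpow_mul_exp_neg_mul_rpow hs one_pos hc
  have hnn (s : ℝ) : 0 ≤ ∫ u in Ioi (0:ℝ), u ^ s * Real.exp (-c * u ^ (1:ℝ)) :=
    setIntegral_nonneg measurableSet_Ioi fun u (hu : 0 < u) => by positivity
  have him (v : ℂ) : |-(1 / π) * (Complex.exp (-(a * π / 2 : ℝ) * Complex.I) * v).im| ≤ ‖v‖ := by
    rw [abs_mul, abs_neg, abs_of_pos (by positivity)]
    have h1 : |(Complex.exp (-(a * π / 2 : ℝ) * Complex.I) * v).im| ≤ ‖v‖ := by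
      refine (Complex.abs_im_le_norm _).trans_eq ?_
      rw [norm_mul, ← Complex.ofReal_neg, Complex.norm_exp_ofReal_mul_I, one_mul]
    have h2 : 1 / π ≤ 1 := by
      rw [div_le_one Real.pi_pos]; linarith [Real.pi_gt_three]
    calc _ ≤ 1 * ‖v‖ := by gcongr
      _ = _ := one_mul _
  set B₁ := ∫ u in Ioi (0:ℝ), u ^ (-a) * Real.exp (-c * u ^ (1:ℝ)) with hB₁
  set B₂ := ∫ u in Ioi (0:ℝ), u ^ a * Real.exp (-c * u ^ (1:ℝ)) with hB₂
  have hB₁0 : 0 ≤ B₁ := hnn _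
  have hB₂0 : 0 ≤ B₂ := hnn _
  have hlarge {z : ℝ} (hz : 0 < z) : |wrightW a 0 (-z)| ≤ B₁ / d * (1 / z) := by
    rw [wrightW_eq_integral ha ha1]
    refine (him _).trans ?_
    have h1 : B₁ / d * (1 / z) =
        ∫ u in Ioi (0:ℝ), 1 / (d * z) * (u ^ (-a) * Real.exp (-c * u ^ (1:ℝ))) := by
      rw [MeasureTheory.integral_const_mul, ← hB₁]; field_simp
    rw [h1]
    refine norm_integral_le_of_norm_le ((hint _ (by linarith)).const_mul _) ?_
    filter_upwards [ae_restrict_mem measurableSet_Ioi] with u (hu : 0 < u)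
    have hv : 0 < d * (z * u ^ a) := by positivity
    have h2 : Real.exp (-(d * (z * u ^ a))) ≤ 1 / (d * (z * u ^ a)) := by
      rw [Real.exp_neg, one_div]
      exact inv_anti₀ hv ((le_add_of_nonneg_right zero_le_one).trans (Real.add_one_le_exp _))
    rw [norm_wrightIntegrand, ← hc_def, ← hd_def, Real.rpow_one]
    calc _ ≤ Real.exp (-(c * u)) * (1 / (d * (z * u ^ a))) := by gcongr
      _ = _ := by rw [Real.rpow_neg hu.le, neg_mul]; field_simp
  have hsmall {z : ℝ} (hz : 0 < z) : |wrightW a 0 (-z)| ≤ 2 * B₂ * z := by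
    have h0 := wrightW_eq_integral ha ha1 0
    rw [neg_zero, wrightW_zero_zero] at h0
    have h1 : wrightW a 0 (-z) = -(1 / π) * (Complex.exp (-(a * π / 2 : ℝ) * Complex.I) *
        ∫ u in Ioi (0:ℝ), (wrightIntegrand a z u - wrightIntegrand a 0 u)).im := by
      rw [integral_sub (integrableOn_wrightIntegrand ha ha1) (integrableOn_wrightIntegrand ha ha1),
        mul_sub, Complex.sub_im, mul_sub, ← h0, sub_zero, wrightW_eq_integral ha ha1]
    rw [h1]
    refine (him _).trans ?_
    have h2 : 2 * B₂ * z = ∫ u in Ioi (0:ℝ), 2 * z * (u ^ a * Real.exp (-c * u ^ (1:ℝ))) := by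
      rw [MeasureTheory.integral_const_mul, ← hB₂]; ring
    rw [h2]
    refine norm_integral_le_of_norm_le ((hint _ (by linarith)).const_mul _) ?_
    filter_upwards [ae_restrict_mem measurableSet_Ioi] with u (hu : 0 < u)
    have hw0 : wrightIntegrand a 0 u =
        Complex.exp (-(Complex.exp (-(a * π / 2 : ℝ) * Complex.I) * u)) := by
      simp [wrightIntegrand]
    have hn0 := norm_wrightIntegrand a 0 u
    rw [zero_mul, mul_zero, neg_zero, Real.exp_zero, mul_one, ← hc_def] at hn0
    have h3 : wrightIntegrand a z u - wrightIntegrand a 0 u = wrightIntegrand a 0 u *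
        (Complex.exp (-(z * u ^ a : ℝ) *
          Complex.exp ((a * (π - a * π / 2) : ℝ) * Complex.I)) - 1) := by
      rw [hw0, wrightIntegrand]; ring
    rw [h3, norm_mul, hn0, Real.rpow_one]
    set v : ℂ := -(z * u ^ a : ℝ) * Complex.exp ((a * (π - a * π / 2) : ℝ) * Complex.I) with hv
    have hvn : ‖v‖ = z * u ^ a := by
      rw [hv, norm_mul, Complex.norm_exp_ofReal_mul_I, norm_neg, Complex.norm_real, mul_one,
        Real.norm_of_nonneg (by positivity)]
    have hvre : v.re ≤ 0 := by
      rw [hv, ← Complex.ofReal_neg, Complex.re_ofReal_mul, Complex.exp_ofReal_mul_I_re, ← hd_def,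
        neg_mul, neg_nonpos]
      positivity
    have h4 : ‖Complex.exp v - 1‖ ≤ 2 * ‖v‖ := by
      rcases le_total ‖v‖ 1 with h | h
      · exact Complex.norm_exp_sub_one_le h
      · have h5 : ‖Complex.exp v‖ ≤ 1 := by
          rw [Complex.norm_exp]; exact Real.exp_le_one_iff.2 hvre
        have h6 := norm_sub_le (Complex.exp v) 1
        rw [norm_one] at h6
        linarith
    rw [hvn] at h4
    calc _ ≤ Real.exp (-(c * u)) * (2 * (z * u ^ a)) := by gcongr
      _ = _ := by rw [neg_mul]; ring
  refine ⟨2 * (B₁ / d + 2 * B₂) + 1, by positivity, fun z hz => ?_⟩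
  have hB : 0 ≤ B₁ / d := by positivity
  have key {y M : ℝ} (hM : 0 ≤ M) (hM' : M ≤ B₁ / d + 2 * B₂) (hy : y ≤ 2 * (z / (1 + z ^ 2))) :
      M * y ≤ (2 * (B₁ / d + 2 * B₂) + 1) * (z / (1 + z ^ 2)) := by
    have h0 : 0 ≤ z / (1 + z ^ 2) := by positivity
    calc M * y ≤ M * (2 * (z / (1 + z ^ 2))) := by gcongr
      _ ≤ _ := by nlinarith
  rcases le_total z 1 with h | h
  · refine (hsmall hz).trans (key (by positivity) (by linarith) ?_)
    rw [← mul_div_assoc, le_div_iff₀ (by positivity)]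
    nlinarith [mul_pos hz hz]
  · refine (hlarge hz).trans (key hB (by linarith) ?_)
    rw [← mul_div_assoc, div_le_div_iff₀ hz (by positivity)]
    nlinarith
/-- `F` is nonnegative on `(0, ∞)` with integral at most `M`, and its values on `[t / 2, t]` are at
most `K` times the value at `t`. -/
structure IsConvMajorant (M K : ℝ) (F : ℝ → ℝ) : Prop where
  nonneg : ∀ t > 0, 0 ≤ F t
  integrableOn : IntegrableOn F (Ioi 0)
  integral_le : ∫ t in Ioi (0:ℝ), F t ≤ M
  doubling : ∀ t > 0, ∀ τ ∈ Icc (t / 2) t, F τ ≤ K * F t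

theorem IsConvMajorant.const_mul {M K : ℝ} {F : ℝ → ℝ} (hF : IsConvMajorant M K F) {c : ℝ}
    (hc : 0 ≤ c) : IsConvMajorant (c * M) K fun t => c * F t where
  nonneg t ht := mul_nonneg hc (hF.nonneg t ht)
  integrableOn := hF.integrableOn.const_mul c
  integral_le := by
    rw [MeasureTheory.integral_const_mul]
    exact mul_le_mul_of_nonneg_left hF.integral_le hc
  doubling t ht τ hτ := by
    rw [mul_left_comm]
    exact mul_le_mul_of_nonneg_left (hF.doubling t ht τ hτ) hc

theorem IsConvMajorant.mono {M M' K : ℝ} {F : ℝ → ℝ} (hF : IsConvMajorant M K F) (hM : M ≤ M') :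
    IsConvMajorant M' K F :=
  ⟨hF.nonneg, hF.integrableOn, hF.integral_le.trans hM, hF.doubling⟩

theorem IsConvMajorant.sum {ι : Type*} [Fintype ι] {M K : ℝ} {F : ι → ℝ → ℝ}
    (hF : ∀ i, IsConvMajorant M K (F i)) :
    IsConvMajorant (Fintype.card ι * M) K fun t => ∑ i, F i t where
  nonneg t ht := Finset.sum_nonneg fun i _ => (hF i).nonneg t ht
  integrableOn := integrable_finsetSum _ fun i _ => (hF i).integrableOn
  integral_le := by
    rw [MeasureTheory.integral_finsetSum _ fun i _ => (hF i).integrableOn]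
    exact (Finset.sum_le_sum fun i _ => (hF i).integral_le).trans_eq (by simp)
  doubling t ht τ hτ := by
    rw [Finset.mul_sum]
    exact Finset.sum_le_sum fun i _ => (hF i).doubling t ht τ hτ

theorem IsConvMajorant.intervalIntegral_le {M K : ℝ} {F : ℝ → ℝ} (hF : IsConvMajorant M K F)
    {t : ℝ} (ht : 0 < t) : ∫ τ in (0:ℝ)..t, F τ ≤ M := by
  rw [intervalIntegral.integral_of_le ht.le]
  refine (setIntegral_mono_set hF.integrableOn ?_ Ioc_subset_Ioi_self.eventuallyLE).trans
    hF.integral_le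
  filter_upwards [ae_restrict_mem measurableSet_Ioi] with u hu using hF.nonneg u hu

theorem IsConvMajorant.intervalIntegrable {M K : ℝ} {F : ℝ → ℝ} (hF : IsConvMajorant M K F)
    {t : ℝ} (ht : 0 < t) : IntervalIntegrable F volume 0 t :=
  (intervalIntegrable_iff_integrableOn_Ioc_of_le ht.le).2
    (hF.integrableOn.mono_set Ioc_subset_Ioi_self)

theorem abs_laplaceConv_le {M₁ M₂ K : ℝ} {F G f g : ℝ → ℝ} (hK : 0 ≤ K)
    (hF : IsConvMajorant M₁ K F) (hG : IsConvMajorant M₂ K G)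
    (hf : ∀ t > 0, |f t| ≤ F t) (hg : ∀ t > 0, |g t| ≤ G t) {t : ℝ} (ht : 0 < t) :
    |laplaceConv f g t| ≤ K * M₂ * F t + K * M₁ * G t := by
  have hF0 := hF.nonneg t ht
  have hG0 := hG.nonneg t ht
  have hGr : IntervalIntegrable (fun τ => G (t - τ)) volume 0 t := by
    simpa using ((hG.intervalIntegrable ht).comp_sub_left t).symm
  have hint : IntervalIntegrable (fun τ => K * F t * G (t - τ) + K * G t * F τ) volume 0 t :=
    (hGr.const_mul _).add ((hF.intervalIntegrable ht).const_mul _)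
  have hbound : |laplaceConv f g t| ≤ ∫ τ in (0:ℝ)..t, K * F t * G (t - τ) + K * G t * F τ := by
    rw [laplaceConv, ← Real.norm_eq_abs]
    refine intervalIntegral.norm_integral_le_of_norm_le ht.le ?_ hint
    filter_upwards [Measure.ae_ne volume t] with τ hτt hτ
    have h1 : 0 < τ := hτ.1
    have h2 : 0 < t - τ := sub_pos.2 (lt_of_le_of_ne hτ.2 hτt)
    rw [norm_mul, Real.norm_eq_abs, Real.norm_eq_abs]
    have hFτ := hF.nonneg τ h1
    have hGτ := hG.nonneg (t - τ) h2
    have h3 : |f τ| * |g (t - τ)| ≤ F τ * G (t - τ) :=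
      mul_le_mul (hf τ h1) (hg _ h2) (abs_nonneg _) hFτ
    refine h3.trans ?_
    rcases le_total (t / 2) τ with h | h
    · have := mul_le_mul_of_nonneg_right (hF.doubling t ht τ ⟨h, hτ.2⟩) hGτ
      have : 0 ≤ K * G t * F τ := by positivity
      linarith
    · have := mul_le_mul_of_nonneg_left
        (hG.doubling t ht (t - τ) ⟨by linarith, by linarith⟩) hFτ
      have : 0 ≤ K * F t * G (t - τ) := by positivity
      linarith
  refine hbound.trans ?_
  rw [intervalIntegral.integral_add (hGr.const_mul _)
    ((hF.intervalIntegrable ht).const_mul _), intervalIntegral.integral_const_mul,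
    intervalIntegral.integral_const_mul, intervalIntegral.integral_comp_sub_left, sub_self,
    sub_zero]
  have h1 := mul_le_mul_of_nonneg_left (hG.intervalIntegral_le ht) (mul_nonneg hK hF0)
  have h2 := mul_le_mul_of_nonneg_left (hF.intervalIntegral_le ht) (mul_nonneg hK hG0)
  linarith

theorem exists_abs_iterConv_le {M K : ℝ} (hM : 0 ≤ M) (hK : 0 ≤ K) (n : ℕ) :
    ∃ C ≥ 0, ∀ h F : Fin (n + 1) → ℝ → ℝ, (∀ j, IsConvMajorant M K (F j)) →
      (∀ j, ∀ t > 0, |h j t| ≤ F j t) → ∀ t > 0, |iterConv n h t| ≤ C * ∑ j, F j t := by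
  induction n with
  | zero =>
    refine ⟨1, zero_le_one, fun h F _ hb t ht => ?_⟩
    simpa [iterConv] using hb 0 t ht
  | succ n ih =>
    obtain ⟨C, hC, ih⟩ := ih
    refine ⟨K * M * C + K * (C * ((n + 1) * M)), by positivity, fun h F hF hb t ht => ?_⟩
    have hsum := (IsConvMajorant.sum fun i : Fin (n + 1) => hF i.castSucc).const_mul hC
    have h1 := abs_laplaceConv_le hK hsum (hF (Fin.last (n + 1)))
      (ih _ _ (fun i => hF i.castSucc) fun i => hb i.castSucc) (hb (Fin.last (n + 1))) ht
    refine h1.trans ?_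
    rw [Fin.sum_univ_castSucc (n := n + 1), Fintype.card_fin]
    have h2 : 0 ≤ ∑ i : Fin (n + 1), F i.castSucc t :=
      Finset.sum_nonneg fun i _ => (hF _).nonneg t ht
    have h3 := (hF (Fin.last (n + 1))).nonneg t ht
    push_cast
    have h4 : 0 ≤ K * (C * ((n + 1) * M)) * ∑ i : Fin (n + 1), F i.castSucc t := by positivity
    have h5 : 0 ≤ K * M * C * F (Fin.last (n + 1)) t := by positivity
    linarith

/-- The majorant, up to constants, of `t⁻¹ * wrightW a 0 (-b * t ^ (-a))`. -/
noncomputable def wrightMajorant (a b t : ℝ) : ℝ :=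
  t⁻¹ * (b * t ^ (-a) / (1 + (b * t ^ (-a)) ^ 2))

theorem wrightMajorant_nonneg (a : ℝ) {b t : ℝ} (hb : 0 < b) (ht : 0 < t) :
    0 ≤ wrightMajorant a b t := by
  unfold wrightMajorant; positivity

theorem isConvMajorant_wrightMajorant {a b : ℝ} (ha : 0 < a) (ha1 : a < 1) (hb : 0 < b) :
    IsConvMajorant (a⁻¹ * (π / 2)) 4 (wrightMajorant a b) where
  nonneg t ht := wrightMajorant_nonneg a hb ht
  integrableOn := by
    have h : IntegrableOn (fun y : ℝ => b * (1 + (b * y) ^ 2)⁻¹) (Ioi 0) :=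
      ((integrable_inv_one_add_sq.comp_mul_left' hb.ne').const_mul b).integrableOn
    have h2 := (integrableOn_Ioi_comp_rpow_iff _ (neg_ne_zero.2 ha.ne')).2 h
    refine IntegrableOn.congr_fun (h2.const_mul a⁻¹) (fun t (ht : 0 < t) => ?_) measurableSet_Ioi
    simp only [wrightMajorant, smul_eq_mul, abs_neg, abs_of_pos ha]
    rw [Real.rpow_sub_one ht.ne']
    field_simp
  integral_le := by
    have h := integral_comp_rpow_Ioi (fun y : ℝ => b * (1 + (b * y) ^ 2)⁻¹) (neg_ne_zero.2 ha.ne')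
    have h2 := integral_comp_mul_left_Ioi (fun y : ℝ => (1 + y ^ 2)⁻¹) 0 hb
    rw [MeasureTheory.integral_const_mul, h2, mul_zero, integral_Ioi_inv_one_add_sq] at h
    simp only [Real.arctan_zero, sub_zero, smul_eq_mul] at h
    rw [mul_inv_cancel_left₀ hb.ne'] at h
    rw [← h, ← MeasureTheory.integral_const_mul]
    refine (setIntegral_congr_fun measurableSet_Ioi fun t (ht : 0 < t) => ?_).le
    simp only [wrightMajorant, abs_neg, abs_of_pos ha]
    rw [Real.rpow_sub_one ht.ne']
    field_simp
  doubling t ht τ hτ := by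
    have hτ0 : 0 < τ := by linarith [hτ.1]
    have h1 : τ⁻¹ ≤ 2 * t⁻¹ := by
      calc τ⁻¹ ≤ (t / 2)⁻¹ := inv_anti₀ (half_pos ht) hτ.1
        _ = _ := by rw [inv_div, div_eq_mul_inv]
    have h2 : t ^ (-a) ≤ τ ^ (-a) := Real.rpow_le_rpow_of_nonpos hτ0 hτ.2 (by linarith)
    have h3 : τ ^ (-a) ≤ 2 * t ^ (-a) := by
      calc τ ^ (-a) ≤ (t / 2) ^ (-a) :=
            Real.rpow_le_rpow_of_nonpos (half_pos ht) hτ.1 (by linarith)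
        _ = 2 ^ a * t ^ (-a) := by
            rw [Real.div_rpow ht.le zero_le_two, Real.rpow_neg zero_le_two]; field_simp
        _ ≤ 2 ^ (1:ℝ) * t ^ (-a) := by
            gcongr
            exact one_le_two
        _ = _ := by rw [Real.rpow_one]
    have h4 : b * τ ^ (-a) / (1 + (b * τ ^ (-a)) ^ 2) ≤
        2 * (b * t ^ (-a)) / (1 + (b * t ^ (-a)) ^ 2) := by
      have : b * τ ^ (-a) ≤ 2 * (b * t ^ (-a)) := by nlinarith
      gcongr
    calc wrightMajorant a b τ
        ≤ 2 * t⁻¹ * (2 * (b * t ^ (-a)) / (1 + (b * t ^ (-a)) ^ 2)) := by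
          unfold wrightMajorant; gcongr
      _ = 4 * wrightMajorant a b t := by unfold wrightMajorant; ring
theorem integrableOn_rpow_mul_inv_one_add_sq {s : ℝ} (hs : -1 < s) (hs1 : s < 1) :
    IntegrableOn (fun q : ℝ => q ^ s * (1 + q ^ 2)⁻¹) (Ioi 0) := by
  have hmeas (S : Set ℝ) :
      AEStronglyMeasurable (fun q : ℝ => q ^ s * (1 + q ^ 2)⁻¹) (volume.restrict S) :=
    Measurable.aestronglyMeasurable (by fun_prop)
  rw [← Ioc_union_Ioi_eq_Ioi zero_le_one]
  refine IntegrableOn.union ?_ ?_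
  · refine Integrable.mono' ((intervalIntegrable_iff_integrableOn_Ioc_of_le zero_le_one).1
      (intervalIntegral.intervalIntegrable_rpow' hs)) (hmeas _) ?_
    filter_upwards [ae_restrict_mem measurableSet_Ioc] with q hq
    have hq0 : 0 < q := hq.1
    rw [Real.norm_of_nonneg (by positivity)]
    exact mul_le_of_le_one_right (by positivity) (inv_le_one_of_one_le₀ (by nlinarith))
  · refine Integrable.mono' (integrableOn_Ioi_rpow_of_lt (by linarith : s - 2 < -1) one_pos)
      (hmeas _) ?_
    filter_upwards [ae_restrict_mem measurableSet_Ioi] with q (hq : 1 < q)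
    have hq0 : 0 < q := by linarith
    rw [Real.norm_of_nonneg (by positivity), Real.rpow_sub hq0, Real.rpow_two, div_eq_mul_inv]
    gcongr
    linarith

theorem integrableOn_rpow_mul_inv_one_add_mul_sq {s c : ℝ} (hs : -1 < s) (hs1 : s < 1)
    (hc : 0 < c) : IntegrableOn (fun p : ℝ => p ^ s * (1 + (c * p) ^ 2)⁻¹) (Ioi 0) := by
  have h := (integrableOn_Ioi_comp_mul_left_iff _ 0 hc).2 (by
    rw [mul_zero]; exact integrableOn_rpow_mul_inv_one_add_sq hs hs1)
  refine IntegrableOn.congr_fun (h.const_mul (c ^ (-s))) (fun p (hp : 0 < p) => ?_)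
    measurableSet_Ioi
  rw [Real.mul_rpow hc.le hp.le, Real.rpow_neg hc.le]
  have := (Real.rpow_pos_of_pos hc s).ne'
  field_simp

theorem integral_rpow_mul_inv_one_add_mul_sq (s : ℝ) {c : ℝ} (hc : 0 < c) :
    ∫ p in Ioi (0:ℝ), p ^ s * (1 + (c * p) ^ 2)⁻¹ =
      c ^ (-s - 1) * ∫ q in Ioi (0:ℝ), q ^ s * (1 + q ^ 2)⁻¹ := by
  have h := integral_comp_mul_left_Ioi (fun q : ℝ => q ^ s * (1 + q ^ 2)⁻¹) 0 hc
  rw [mul_zero, smul_eq_mul] at h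
  rw [Real.rpow_sub_one hc.ne', div_eq_mul_inv, mul_assoc, ← h, ← MeasureTheory.integral_const_mul]
  refine setIntegral_congr_fun measurableSet_Ioi fun p (hp : 0 < p) => ?_
  rw [Real.mul_rpow hc.le hp.le, Real.rpow_neg hc.le]
  have := (Real.rpow_pos_of_pos hc s).ne'
  field_simp

theorem wrightMajorant_mul_eq (a l t p : ℝ) :
    wrightMajorant a (l * p) t =
      t⁻¹ * (l * t ^ (-a)) * (p * (1 + (l * t ^ (-a) * p) ^ 2)⁻¹) := by
  unfold wrightMajorant
  rw [mul_right_comm l p, div_eq_mul_inv]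
  ring

theorem abs_exp_neg_sub_exp_neg_le {a b : ℝ} (ha : 0 ≤ a) (hb : 0 ≤ b) :
    |Real.exp (-a) - Real.exp (-b)| ≤ |a - b| := by
  wlog h : a ≤ b generalizing a b
  · rw [abs_sub_comm, abs_sub_comm a]
    exact this hb ha (le_of_not_ge h)
  have h1 : Real.exp (-b) ≤ Real.exp (-a) := Real.exp_le_exp.2 (by linarith)
  have h2 : Real.exp (-b) = Real.exp (-a) * Real.exp (-(b - a)) := by
    rw [← Real.exp_add]; congr 1; ring
  have h3 := Real.add_one_le_exp (-(b - a))
  have h4 : Real.exp (-a) ≤ 1 := Real.exp_le_one_iff.2 (by linarith)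
  rw [abs_of_nonneg (by linarith), abs_of_nonpos (by linarith), h2]
  nlinarith [Real.exp_pos (-a)]

theorem exists_abs_Sconv_le (m : ℕ) {α : Fin (m + 1) → ℝ} (hpos : ∀ j, 0 < α j)
    (hlt1 : ∀ j, α j < 1) :
    ∃ C ≥ 0, ∀ l : Fin (m + 1) → ℝ, (∀ j, 0 < l j) → ∀ t > 0,
      |Sconv m 0 α l t| ≤ C * ∑ j, wrightMajorant (α j) (l j) t := by
  choose A hA hAb using fun j => abs_wrightW_le (hpos j) (hlt1 j)
  set B := ∑ j, A j with hB
  set M := ∑ j, (α j)⁻¹ * (π / 2) with hM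
  have hM0 : ∀ j, 0 ≤ (α j)⁻¹ * (π / 2) := fun j => by have := hpos j; positivity
  have hB0 : 0 ≤ B := Finset.sum_nonneg fun j _ => (hA j).le
  have hMn : 0 ≤ M := Finset.sum_nonneg fun j _ => hM0 j
  obtain ⟨C, hC, hCb⟩ := exists_abs_iterConv_le (mul_nonneg hB0 hMn) (by norm_num : (0:ℝ) ≤ 4) m
  refine ⟨C * B, by positivity, fun l hl t ht => ?_⟩
  have h := hCb (fun j t => t ^ ((if j = 0 then (0:ℝ) else 0) - 1) *
      wrightW (α j) (if j = 0 then (0:ℝ) else 0) (-(l j) * t ^ (-(α j))))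
    (fun j t => B * wrightMajorant (α j) (l j) t)
    (fun j => ((isConvMajorant_wrightMajorant (hpos j) (hlt1 j) (hl j)).mono
      (Finset.single_le_sum (fun i _ => hM0 i) (Finset.mem_univ j))).const_mul hB0) ?_ t ht
  · rw [← Finset.mul_sum, ← mul_assoc] at h
    exact h
  · intro j t ht
    have hz : 0 < l j * t ^ (-(α j)) := mul_pos (hl j) (Real.rpow_pos_of_pos ht _)
    have h1 : |wrightW (α j) 0 (-(l j * t ^ (-(α j))))| ≤
        B * (l j * t ^ (-(α j)) / (1 + (l j * t ^ (-(α j))) ^ 2)) :=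
      (hAb j _ hz).trans (mul_le_mul_of_nonneg_right
        (Finset.single_le_sum (fun i _ => (hA i).le) (Finset.mem_univ j)) (by positivity))
    simp only [ite_self, zero_sub, Real.rpow_neg_one, neg_mul]
    rw [abs_mul, abs_of_pos (inv_pos.2 ht), wrightMajorant, mul_left_comm B]
    exact mul_le_mul_of_nonneg_left h1 (inv_pos.2 ht).le

theorem exists_abs_kerE_sub_le (m : ℕ) {α lam : Fin (m + 1) → ℝ} (hpos : ∀ j, 0 < α j)
    (hlt1 : ∀ j, α j < 1) (hlam : ∀ j, 0 < lam j) :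
    ∃ D ≥ 0, ∀ t > 0, ∀ x y : ℝ, |kerE m α lam y t - kerE m α lam x t| ≤
      D * (∑ j, t⁻¹ * (lam j * t ^ (-(α j))) ^ (1 / 2 : ℝ)) * |y ^ 2 - x ^ 2| := by
  obtain ⟨C, hC, hS⟩ := exists_abs_Sconv_le m hpos hlt1
  set J := ∫ q in Ioi (0:ℝ), q ^ (-(1 / 2 : ℝ)) * (1 + q ^ 2)⁻¹ with hJ
  have hJ0 : 0 ≤ J := setIntegral_nonneg measurableSet_Ioi fun q (hq : 0 < q) => by positivity
  set κ : ℝ := (4 * π) ^ (-(1 / 2 : ℝ)) with hκ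
  have hκ0 : 0 ≤ κ := by positivity
  refine ⟨κ * (C / 4 * J), by positivity, fun t ht x y => ?_⟩
  set f : ℝ → ℝ := fun p => Sconv m 0 α (fun j => lam j * p) t with hf
  set g : ℝ → ℝ → ℝ := fun y p => p ^ (-(1 / 2 : ℝ)) * Real.exp (-(|y| ^ 2) / (4 * p)) * f p with hg
  set c : Fin (m + 1) → ℝ := fun j => lam j * t ^ (-(α j)) with hc
  have hc0 (j) : 0 < c j := mul_pos (hlam j) (Real.rpow_pos_of_pos ht _)
  have hfb {p : ℝ} (hp : 0 < p) :
      |f p| ≤ C * ∑ j, t⁻¹ * c j * (p * (1 + (c j * p) ^ 2)⁻¹) := by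
    simpa only [wrightMajorant_mul_eq] using
      hS (fun j => lam j * p) (fun j => mul_pos (hlam j) hp) t ht
  have hexp (y : ℝ) {p : ℝ} (hp : 0 < p) : Real.exp (-(|y| ^ 2) / (4 * p)) ≤ 1 := by
    rw [Real.exp_le_one_iff, neg_div, neg_nonpos]; positivity
  by_cases hfm : AEStronglyMeasurable f (volume.restrict (Ioi 0))
  · have hgi (y : ℝ) : IntegrableOn (g y) (Ioi 0) := by
      refine Integrable.mono' (g := fun p => C * ∑ j, t⁻¹ * c j *
        (p ^ (1 / 2 : ℝ) * (1 + (c j * p) ^ 2)⁻¹)) ?_ ?_ ?_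
      · exact (integrable_finsetSum _ fun j _ => (integrableOn_rpow_mul_inv_one_add_mul_sq
          (by norm_num) (by norm_num) (hc0 j)).const_mul _).const_mul _
      · exact AEStronglyMeasurable.mul
          (Measurable.aestronglyMeasurable (by fun_prop)) hfm
      · filter_upwards [ae_restrict_mem measurableSet_Ioi] with p (hp : 0 < p)
        have hpow : p ^ (1 / 2 : ℝ) = p ^ (-(1 / 2 : ℝ)) * p := by
          rw [← Real.rpow_add_one hp.ne']; norm_num
        rw [hg, norm_mul, Real.norm_of_nonneg (by positivity), Real.norm_eq_abs]
        calc p ^ (-(1 / 2 : ℝ)) * Real.exp (-(|y| ^ 2) / (4 * p)) * |f p|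
            ≤ p ^ (-(1 / 2 : ℝ)) * 1 * (C * ∑ j, t⁻¹ * c j * (p * (1 + (c j * p) ^ 2)⁻¹)) := by
              gcongr
              · exact hexp y hp
              · exact hfb hp
          _ = _ := by
              rw [mul_one, mul_left_comm, Finset.mul_sum]
              congr 1
              refine Finset.sum_congr rfl fun j _ => ?_
              rw [hpow]; ring
    have hdiff : |(∫ p in Ioi (0:ℝ), g y p) - ∫ p in Ioi (0:ℝ), g x p| ≤
        ∫ p in Ioi (0:ℝ), |y ^ 2 - x ^ 2| * (C / 4) *
          ∑ j, t⁻¹ * c j * (p ^ (-(1 / 2 : ℝ)) * (1 + (c j * p) ^ 2)⁻¹) := by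
      rw [← integral_sub (hgi y) (hgi x), ← Real.norm_eq_abs]
      refine norm_integral_le_of_norm_le ?_ ?_
      · exact (integrable_finsetSum _ fun j _ => (integrableOn_rpow_mul_inv_one_add_mul_sq
          (by norm_num) (by norm_num) (hc0 j)).const_mul _).const_mul _
      · filter_upwards [ae_restrict_mem measurableSet_Ioi] with p (hp : 0 < p)
        have h1 : |Real.exp (-(|y| ^ 2) / (4 * p)) - Real.exp (-(|x| ^ 2) / (4 * p))| ≤
            |y ^ 2 - x ^ 2| / (4 * p) := by
          rw [neg_div, neg_div]
          refine (abs_exp_neg_sub_exp_neg_le (by positivity) (by positivity)).trans_eq ?_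
          rw [← sub_div, abs_div, abs_of_pos (by positivity : 0 < 4 * p), sq_abs, sq_abs]
        have h2 : g y p - g x p = p ^ (-(1 / 2 : ℝ)) *
            (Real.exp (-(|y| ^ 2) / (4 * p)) - Real.exp (-(|x| ^ 2) / (4 * p))) * f p := by
          simp only [hg]; ring
        rw [h2, norm_mul, norm_mul, Real.norm_of_nonneg (by positivity), Real.norm_eq_abs,
          Real.norm_eq_abs]
        calc _ ≤ p ^ (-(1 / 2 : ℝ)) * (|y ^ 2 - x ^ 2| / (4 * p)) *
              (C * ∑ j, t⁻¹ * c j * (p * (1 + (c j * p) ^ 2)⁻¹)) := by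
              gcongr
              exact hfb hp
          _ = _ := by
              simp only [Finset.mul_sum]
              refine Finset.sum_congr rfl fun j _ => ?_
              field_simp
    have hval : (∫ p in Ioi (0:ℝ), |y ^ 2 - x ^ 2| * (C / 4) *
          ∑ j, t⁻¹ * c j * (p ^ (-(1 / 2 : ℝ)) * (1 + (c j * p) ^ 2)⁻¹)) =
        |y ^ 2 - x ^ 2| * (C / 4) * ∑ j, t⁻¹ * c j ^ (1 / 2 : ℝ) * J := by
      rw [MeasureTheory.integral_const_mul, MeasureTheory.integral_finsetSum _ fun j _ =>
        (integrableOn_rpow_mul_inv_one_add_mul_sq (by norm_num) (by norm_num) (hc0 j)).const_mul _]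
      congr 1
      refine Finset.sum_congr rfl fun j _ => ?_
      rw [MeasureTheory.integral_const_mul, integral_rpow_mul_inv_one_add_mul_sq _ (hc0 j), ← hJ]
      have : c j ^ (1 / 2 : ℝ) = c j ^ (-(-(1 / 2)) - 1 : ℝ) * c j := by
        rw [← Real.rpow_add_one (hc0 j).ne']; norm_num
      rw [this]; ring
    rw [hval] at hdiff
    calc |kerE m α lam y t - kerE m α lam x t|
        = κ * |(∫ p in Ioi (0:ℝ), g y p) - ∫ p in Ioi (0:ℝ), g x p| := by
          rw [kerE, kerE, Gam1, Gam1, ← mul_sub, abs_mul, abs_of_nonneg hκ0]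
      _ ≤ κ * (|y ^ 2 - x ^ 2| * (C / 4) * ∑ j, t⁻¹ * c j ^ (1 / 2 : ℝ) * J) := by gcongr
      _ = _ := by rw [← Finset.sum_mul]; ring
  · have hz (y : ℝ) : kerE m α lam y t = 0 := by
      rw [kerE, Gam1]
      refine mul_eq_zero_of_right _ (integral_undef fun hi => hfm ?_)
      have hm : AEStronglyMeasurable
          (fun p : ℝ => p ^ (1 / 2 : ℝ) * Real.exp (|y| ^ 2 / (4 * p)) * g y p)
          (volume.restrict (Ioi 0)) :=
        AEStronglyMeasurable.mul (Measurable.aestronglyMeasurable (by fun_prop)) hi.1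
      refine hm.congr ?_
      filter_upwards [ae_restrict_mem measurableSet_Ioi] with p (hp : 0 < p)
      simp only [hg]
      rw [neg_div, Real.exp_neg, Real.rpow_neg hp.le]
      have := (Real.rpow_pos_of_pos hp (1 / 2)).ne'
      field_simp
    rw [hz, hz, sub_self, abs_zero]
    exact mul_nonneg (mul_nonneg (by positivity) (Finset.sum_nonneg fun j _ => by
      have := hlam j; positivity)) (abs_nonneg _)

theorem exists_abs_kerEx_le (m : ℕ) {α lam : Fin (m + 1) → ℝ} (hpos : ∀ j, 0 < α j)
    (hlt1 : ∀ j, α j < 1) (hlam : ∀ j, 0 < lam j) :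
    ∃ D ≥ 0, ∀ t > 0, ∀ x : ℝ, |kerEx m α lam x t| ≤
      D * (∑ j, t⁻¹ * (lam j * t ^ (-(α j))) ^ (1 / 2 : ℝ)) * |x| := by
  obtain ⟨D, hD, hb⟩ := exists_abs_kerE_sub_le m hpos hlt1 hlam
  refine ⟨2 * D, by positivity, fun t ht x => ?_⟩
  set P := D * (∑ j, t⁻¹ * (lam j * t ^ (-(α j))) ^ (1 / 2 : ℝ)) with hP
  have hP0 : 0 ≤ P := mul_nonneg hD (Finset.sum_nonneg fun j _ => by
    have := hlam j; positivity)
  have key (ε : ℝ) (hε : 0 < ε) : |kerEx m α lam x t| ≤ P * (2 * |x| + ε) := by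
    rw [kerEx, ← Real.norm_eq_abs]
    refine norm_deriv_le_of_lip' (by positivity) ?_
    filter_upwards [Metric.ball_mem_nhds x hε] with y hy
    rw [Metric.mem_ball, Real.dist_eq] at hy
    refine (hb t ht x y).trans ?_
    rw [sq_sub_sq, abs_mul, Real.norm_eq_abs, ← mul_assoc]
    gcongr
    calc |y + x| = |(y - x) + 2 * x| := by ring_nf
      _ ≤ |y - x| + |2 * x| := abs_add_le _ _
      _ ≤ 2 * |x| + ε := by rw [abs_mul, abs_two]; linarith
  have hlim : Tendsto (fun ε : ℝ => P * (2 * |x| + ε)) (𝓝[>] 0) (𝓝 (P * (2 * |x| + 0))) :=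
    ((continuous_const.mul (continuous_const.add continuous_id)).tendsto 0).mono_left
      nhdsWithin_le_nhds
  refine (ge_of_tendsto hlim (by
    filter_upwards [self_mem_nhdsWithin] with ε hε using key ε hε)).trans_eq ?_
  rw [hP]; ring

theorem exists_abs_kerEx_le_rpow (m : ℕ) {α lam : Fin (m + 1) → ℝ} (hmono : Monotone α)
    (hpos : ∀ j, 0 < α j) (hlt1 : ∀ j, α j < 1) (hlam : ∀ j, 0 < lam j) {T : ℝ} (hT : 0 < T) :
    ∃ D ≥ 0, ∀ t ∈ Ioc 0 T, ∀ x : ℝ, |kerEx m α lam x t| ≤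
      D * t ^ (-(α (Fin.last m)) / 2 - 1) * |x| := by
  obtain ⟨D, hD, hb⟩ := exists_abs_kerEx_le m hpos hlt1 hlam
  refine ⟨D * ∑ j, lam j ^ (1 / 2 : ℝ) * T ^ ((α (Fin.last m) - α j) / 2), ?_,
    fun t ht x => (hb t ht.1 x).trans ?_⟩
  · exact mul_nonneg hD (Finset.sum_nonneg fun j _ => by have := hlam j; positivity)
  have ht0 : 0 < t := ht.1
  rw [mul_assoc D (∑ j, _) (t ^ _), Finset.sum_mul]
  refine mul_le_mul_of_nonneg_right (mul_le_mul_of_nonneg_left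
    (Finset.sum_le_sum fun j _ => ?_) hD) (abs_nonneg x)
  have h1 : t⁻¹ * (lam j * t ^ (-(α j))) ^ (1 / 2 : ℝ) =
      lam j ^ (1 / 2 : ℝ) * t ^ ((α (Fin.last m) - α j) / 2) *
        t ^ (-(α (Fin.last m)) / 2 - 1) := by
    rw [Real.mul_rpow (hlam j).le (by positivity), ← Real.rpow_mul ht0.le, mul_assoc,
      ← Real.rpow_add ht0, ← Real.rpow_neg_one, mul_left_comm, ← Real.rpow_add ht0]
    congr 2
    ring
  rw [h1]
  have := hlam j
  have h2 : 0 ≤ (α (Fin.last m) - α j) / 2 := by linarith [hmono (Fin.le_last j)]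
  have := ht.2
  gcongr

/-- Hölder-in-`δ` bound for the boundary trace of `E_x`:
`∫_{t-δ}^t |E_x(s(t) - s(τ), t-τ)| dτ ≤ C δ^{β - α_m/2}`. -/
theorem kerEx_boundary_trace_bound
    (m : ℕ) (α lam : Fin (m + 1) → ℝ)
    (hmono : StrictMono α) (hpos : ∀ j, 0 < α j) (hlt1 : ∀ j, α j < 1)
    (hlam : ∀ j, 0 < lam j)
    (T : ℝ) (hT : 0 < T) (s : ℝ → ℝ)
    (β : ℝ) (hβ : α (Fin.last m) / 2 < β)
    (hs : ∀ t ∈ Set.Icc (0:ℝ) T, ∀ τ ∈ Set.Icc (0:ℝ) T, |s t - s τ| ≤ |t - τ| ^ β) :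
    ∃ C > (0:ℝ), ∀ t ∈ Set.Ioc (0:ℝ) T, ∀ δ ∈ Set.Ioo (0:ℝ) t,
      ∫ τ in (t - δ)..t, |kerEx m α lam (s t - s τ) (t - τ)| ≤
        C * δ ^ (β - α (Fin.last m) / 2) := by
  obtain ⟨D, hD, hb⟩ := exists_abs_kerEx_le_rpow m hmono.monotone hpos hlt1 hlam hT
  set γ := β - α (Fin.last m) / 2 with hγ
  have hγ0 : 0 < γ := sub_pos.2 hβ
  refine ⟨D / γ + 1, by positivity, fun t ht δ hδ => ?_⟩
  have hδ0 : 0 < δ := hδ.1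
  have hint : IntervalIntegrable (fun τ : ℝ => D * (t - τ) ^ (γ - 1)) volume (t - δ) t := by
    have h := (intervalIntegral.intervalIntegrable_rpow' (a := δ) (b := 0)
      (by linarith : -1 < γ - 1)).comp_sub_left t
    rw [sub_zero] at h
    exact h.const_mul D
  have hval : ∫ τ in (t - δ)..t, D * (t - τ) ^ (γ - 1) = D / γ * δ ^ γ := by
    rw [intervalIntegral.integral_const_mul,
      intervalIntegral.integral_comp_sub_left (fun u : ℝ => u ^ (γ - 1)), sub_self,
      sub_sub_cancel, integral_rpow (Or.inl (by linarith)), sub_add_cancel,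
      Real.zero_rpow hγ0.ne', sub_zero]
    ring
  have hbound : ‖∫ τ in (t - δ)..t, |kerEx m α lam (s t - s τ) (t - τ)|‖ ≤
      ∫ τ in (t - δ)..t, D * (t - τ) ^ (γ - 1) := by
    refine intervalIntegral.norm_integral_le_of_norm_le (by linarith) ?_ hint
    filter_upwards [Measure.ae_ne volume t] with τ hτt hτ
    have hτ0 : 0 < τ := by linarith [hτ.1, hδ.2]
    have h1 : 0 < t - τ := sub_pos.2 (lt_of_le_of_ne hτ.2 hτt)
    have h2 := hs t ⟨ht.1.le, ht.2⟩ τ ⟨hτ0.le, hτ.2.trans ht.2⟩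
    rw [abs_of_pos h1] at h2
    rw [Real.norm_eq_abs, abs_abs]
    calc _ ≤ D * (t - τ) ^ (-(α (Fin.last m)) / 2 - 1) * |s t - s τ| :=
          hb _ ⟨h1, by linarith [ht.2]⟩ _
      _ ≤ D * (t - τ) ^ (-(α (Fin.last m)) / 2 - 1) * (t - τ) ^ β := by gcongr
      _ = D * (t - τ) ^ (γ - 1) := by
          rw [mul_assoc, ← Real.rpow_add h1, hγ]
          congr 2
          ring
  rw [hval] at hbound
  have h3 : 0 ≤ δ ^ γ := by positivity
  linarith [(Real.le_norm_self _).trans hbound]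
end

section
/- Integrability of the E-potential integrand: Let T > 0, let φ : (0,T] → ℝ be such that t ↦ t^{1−α_m} φ(t) extends to a continuous function on [0,T], and let s : [0,T] → ℝ be continuous. Then for every t ∈ (0,T] and every x ∈ ℝ with x ≠ s(t), the function τ ↦ φ(τ) E(x − s(τ), t − τ) is Lebesgue integrable on (0,t), and moreover ∫₀^t |φ(τ) E(x − s(τ), t − τ)| dτ ≤ C · (sup_{t ∈ (0,T)} |t^{1−α_m} φ(t)|) · t^{3α_m/2 − 1} B(α_m, α_m/2) for a constant C > 0 independent of x, t and φ, where B denotes the Euler Beta function. -/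
open MeasureTheory Real Filter Set Topology intervalIntegral

/-- Mellin transform of `exp (-(b * t))` for complex `b` in the right half-plane. -/
theorem integral_cpow_mul_cexp_neg_mul_Ioi {a b : ℂ} (ha : 0 < a.re) (hb : 0 < b.re) :
    ∫ t : ℝ in Ioi 0, (t : ℂ) ^ (a - 1) * Complex.exp (-(b * t)) =
      (1 / b) ^ a * Complex.Gamma a := by
  have hnorm : ∀ (w c : ℂ) (t : ℝ), 0 < t →
      ‖(t : ℂ) ^ w * Complex.exp (-(c * t))‖ = t ^ w.re * rexp (-(c.re * t)) := by
    intro w c t ht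
    rw [norm_mul, Complex.norm_cpow_eq_rpow_re_of_pos ht, Complex.norm_exp]
    simp
  have hint : ∀ (s c : ℝ), -1 < s → 0 < c →
      IntegrableOn (fun t : ℝ => t ^ s * rexp (-(c * t))) (Ioi 0) := by
    intro s c hs hc
    have := integrableOn_rpow_mul_exp_neg_mul_rpow (p := 1) hs one_pos hc
    simpa only [rpow_one, neg_mul] using this
  have hcont : ∀ w c : ℂ, ContinuousOn
      (fun t : ℝ => (t : ℂ) ^ w * Complex.exp (-(c * t))) (Ioi 0) := by
    intro w c
    refine ContinuousOn.mul ?_ (by fun_prop)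
    exact ContinuousOn.cpow (by fun_prop) continuousOn_const fun t ht => by
      simpa using ht
  set U : Set ℂ := {c | 0 < c.re} with hU
  have hUo : IsOpen U := isOpen_lt continuous_const Complex.continuous_re
  have hUc : IsPreconnected U := (convex_halfSpace_re_gt 0).isPreconnected
  have hderiv : DifferentiableOn ℂ (fun c : ℂ =>
      ∫ t : ℝ in Ioi 0, (t : ℂ) ^ (a - 1) * Complex.exp (-(c * t))) U := by
    intro c hc
    have hc' : 0 < c.re := hc
    have hball : Metric.ball c (c.re / 2) ∈ 𝓝 c := Metric.ball_mem_nhds c (by positivity)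
    refine (_root_.hasDerivAt_integral_of_dominated_loc_of_deriv_le
      (F := fun c (t : ℝ) => (t : ℂ) ^ (a - 1) * Complex.exp (-(c * t)))
      (F' := fun c (t : ℝ) => -(t : ℂ) * ((t : ℂ) ^ (a - 1) * Complex.exp (-(c * t))))
      (bound := fun t => t ^ a.re * rexp (-(c.re / 2 * t)))
      hball ?_ ?_ ?_ ?_ ?_ ?_).2.differentiableAt.differentiableWithinAt
    · exact Eventually.of_forall fun d =>
        (hcont _ d).aestronglyMeasurable measurableSet_Ioi
    · refine (hint (a - 1).re c.re (by simpa using ha) hc').mono'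
        ((hcont _ c).aestronglyMeasurable measurableSet_Ioi) ?_
      filter_upwards [ae_restrict_mem measurableSet_Ioi] with t ht
      exact (hnorm _ _ t ht).le
    · refine ContinuousOn.aestronglyMeasurable ?_ measurableSet_Ioi
      exact ContinuousOn.mul (by fun_prop) (hcont _ c)
    · filter_upwards [ae_restrict_mem measurableSet_Ioi] with t ht d hd
      have ht' : 0 < t := ht
      rw [norm_mul, hnorm _ _ t ht, norm_neg, Complex.norm_real, norm_of_nonneg ht'.le,
        ← mul_assoc]
      have h1 : t * t ^ (a - 1).re = t ^ a.re := by
        rw [Complex.sub_re, Complex.one_re, rpow_sub_one ht'.ne']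
        field_simp
      rw [h1]
      have h2 : c.re / 2 ≤ d.re := by
        have := (Complex.abs_re_le_norm (d - c)).trans (mem_ball_iff_norm.1 hd).le
        rw [Complex.sub_re, abs_le] at this
        linarith [this.1]
      gcongr
    · exact hint _ _ (by linarith) (by positivity)
    · filter_upwards with t d hd
      have h1 : HasDerivAt (fun c : ℂ => -(c * (t : ℂ))) (-(1 * (t : ℂ))) d :=
        ((hasDerivAt_id d).mul_const (t : ℂ)).neg
      convert! (h1.cexp.const_mul ((t : ℂ) ^ (a - 1))) using 1
      ring
  have hright : DifferentiableOn ℂ (fun c : ℂ => (1 / c) ^ a * Complex.Gamma a) U := by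
    intro c hc
    have hc' : 0 < c.re := hc
    have hc0 : c ≠ 0 := fun h => by simp [h] at hc'
    refine DifferentiableAt.differentiableWithinAt ?_
    refine DifferentiableAt.mul_const (DifferentiableAt.cpow ?_ (by fun_prop) ?_) _
    · exact (differentiableAt_const _).div differentiableAt_id hc0
    · left
      rw [one_div, Complex.inv_re]
      exact div_pos hc' (Complex.normSq_pos.2 hc0)
  refine (hderiv.analyticOnNhd hUo).eqOn_of_preconnected_of_frequently_eq
    (hright.analyticOnNhd hUo) hUc (z₀ := 1) (by simp [hU]) ?_ hb
  have htend : Tendsto (fun n : ℕ => ((1 + 1 / ((n : ℝ) + 1) : ℝ) : ℂ)) atTop (𝓝[≠] 1) := by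
    refine tendsto_nhdsWithin_iff.2 ⟨?_, Eventually.of_forall fun n => ?_⟩
    · have := (tendsto_one_div_add_atTop_nhds_zero_nat (𝕜 := ℝ)).const_add 1
      rw [add_zero] at this
      exact_mod_cast (Complex.continuous_ofReal.tendsto _).comp this
    · have : (0 : ℝ) < 1 / ((n : ℝ) + 1) := by positivity
      simp only [mem_compl_iff, mem_singleton_iff]
      intro h
      have h' : (1 + 1 / ((n : ℝ) + 1) : ℝ) = 1 := by exact_mod_cast h
      linarith
  refine htend.frequently (Frequently.of_forall fun n => ?_)
  exact Complex.integral_cpow_mul_exp_neg_mul_Ioi ha (by positivity)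

/-- `exp (-c r)` absorbs `exp (y r ^ a)` when `a < 1`. -/
theorem integrableOn_exp_neg_mul_add_mul_rpow {a c : ℝ} (ha : 0 < a) (ha1 : a < 1) (hc : 0 < c)
    (y : ℝ) : IntegrableOn (fun r : ℝ => rexp (-(c * r) + y * r ^ a)) (Ioi 0) := by
  refine integrable_of_isBigO_exp_neg (b := c / 2) (by positivity) ?_ ?_
  · refine ContinuousOn.rexp (ContinuousOn.add (by fun_prop) (continuousOn_const.mul ?_))
    exact continuousOn_id.rpow_const fun _ _ => Or.inr ha.le
  · refine Asymptotics.IsBigO.of_bound 1 ?_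
    have h := (tendsto_rpow_neg_atTop (sub_pos.2 ha1)).eventually_le_const
      (show 0 < c / (2 * (|y| + 1)) by positivity)
    filter_upwards [h, eventually_gt_atTop 0] with r hr hr0
    have hr : r ^ a ≤ c / (2 * (|y| + 1)) * r := by
      rw [neg_sub, rpow_sub_one hr0.ne', div_le_iff₀ hr0] at hr
      exact hr
    rw [norm_of_nonneg (exp_pos _).le, norm_of_nonneg (exp_pos _).le, one_mul, exp_le_exp]
    have h1 : y * r ^ a ≤ (|y| + 1) * (c / (2 * (|y| + 1)) * r) :=
      mul_le_mul (by linarith [le_abs_self y]) hr (by positivity) (by positivity)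
    have h2 : (|y| + 1) * (c / (2 * (|y| + 1)) * r) = c / 2 * r := by
      field_simp
    linarith

/-- The integrand of the Hankel-type representation of the Wright function. -/
noncomputable def wrightKernel (a y r : ℝ) : ℂ :=
  -Complex.exp (-(↑(π * a / (1 + a)) * Complex.I)) *
    Complex.exp (-(Complex.exp (-(↑(π * a / (1 + a)) * Complex.I)) * r) +
      y * Complex.exp (↑(π * a / (1 + a)) * Complex.I) * ((r ^ a : ℝ) : ℂ))

theorem cos_wrightAngle_pos {a : ℝ} (ha : 0 < a) (ha1 : a < 1) : 0 < cos (π * a / (1 + a)) := by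
  have := pi_pos
  apply cos_pos_of_mem_Ioo
  constructor
  · have : 0 < π * a / (1 + a) := by positivity
    linarith
  · rw [div_lt_div_iff₀ (by linarith) two_pos]
    nlinarith

theorem re_cexp_wrightAngle (η : ℝ) : (Complex.exp (η * Complex.I)).re = cos η := by
  rw [Complex.exp_ofReal_mul_I_re]

theorem re_cexp_neg_wrightAngle (η : ℝ) : (Complex.exp (-(η * Complex.I))).re = cos η := by
  rw [← neg_mul, ← Complex.ofReal_neg, Complex.exp_ofReal_mul_I_re, cos_neg]

theorem norm_wrightKernel (a y r : ℝ) :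
    ‖wrightKernel a y r‖ =
      rexp (-(cos (π * a / (1 + a)) * r) + y * cos (π * a / (1 + a)) * r ^ a) := by
  rw [wrightKernel, norm_mul, norm_neg, Complex.norm_exp, Complex.norm_exp]
  simp only [Complex.add_re, Complex.neg_re, Complex.re_mul_ofReal, Complex.re_ofReal_mul,
    re_cexp_wrightAngle, re_cexp_neg_wrightAngle]
  simp

theorem measurable_wrightKernel (a y : ℝ) : Measurable (wrightKernel a y) := by
  unfold wrightKernel
  fun_prop

theorem integrableOn_wrightKernel {a : ℝ} (ha : 0 < a) (ha1 : a < 1) (y : ℝ) :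
    IntegrableOn (wrightKernel a y) (Ioi 0) := by
  refine (integrableOn_exp_neg_mul_add_mul_rpow ha ha1 (cos_wrightAngle_pos ha ha1)
    (y * cos (π * a / (1 + a)))).mono' (measurable_wrightKernel a y).aestronglyMeasurable ?_
  exact Eventually.of_forall fun r => (norm_wrightKernel a y r).le

theorem hasSum_integral_wrightKernel {a : ℝ} (ha : 0 < a) (ha1 : a < 1) (y : ℝ) :
    HasSum (fun k : ℕ => -(((y ^ k / k.factorial * Gamma (a * k + 1) : ℝ) : ℂ) *
      Complex.exp (↑(π * (a * k)) * Complex.I))) (∫ r in Ioi 0, wrightKernel a y r) := by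
  have hc := cos_wrightAngle_pos ha ha1
  set η := π * a / (1 + a) with hη
  set c := cos η with hcdef
  have hηpos : 0 < η := by have := pi_pos; positivity
  have hηlt : η < π := by
    rw [hη, div_lt_iff₀ (by linarith)]
    nlinarith [pi_pos]
  set b := Complex.exp (-(η * Complex.I)) with hb
  set w := Complex.exp (η * Complex.I) with hw
  have hbre : b.re = c := re_cexp_neg_wrightAngle η
  have hwnorm : ‖w‖ = 1 := Complex.norm_exp_ofReal_mul_I η
  have hbnorm : ‖b‖ = 1 := by rw [hb, Complex.norm_exp]; simp
  have hinv : 1 / b = w := by rw [one_div, hb, hw, ← Complex.exp_neg, neg_neg]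
  have hexp : ∀ z : ℂ, HasSum (fun k : ℕ => z ^ k / (k.factorial : ℂ)) (Complex.exp z) := by
    intro z
    rw [Complex.exp_eq_exp_ℂ]
    exact NormedSpace.expSeries_div_hasSum_exp z
  have hrexp : ∀ z : ℝ, HasSum (fun k : ℕ => z ^ k / (k.factorial : ℝ)) (rexp z) := by
    intro z
    rw [Real.exp_eq_exp_ℝ]
    exact NormedSpace.expSeries_div_hasSum_exp z
  have hsum := MeasureTheory.hasSum_integral_of_dominated_convergence
    (μ := volume.restrict (Ioi (0 : ℝ)))
    (F := fun (k : ℕ) (r : ℝ) => -b * (Complex.exp (-(b * r)) *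
      ((y * w * ((r ^ a : ℝ) : ℂ)) ^ k / (k.factorial : ℂ))))
    (f := wrightKernel a y)
    (fun k r => rexp (-(c * r)) * ((|y| * |r ^ a|) ^ k / (k.factorial : ℝ)))
    (fun k => Measurable.aestronglyMeasurable (by fun_prop))
    (fun k => Eventually.of_forall fun r => by
      rw [norm_mul, norm_neg, hbnorm, one_mul, norm_mul, Complex.norm_exp, norm_div, norm_pow,
        norm_mul, norm_mul, hwnorm, Complex.norm_real, Complex.norm_real, Complex.norm_natCast]
      simp [hbre])
    (Eventually.of_forall fun r => (hrexp _).summable.mul_left _)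
    ?_ ?_
  · convert! hsum using 2 with k
    have hGam := integral_cpow_mul_cexp_neg_mul_Ioi (a := ((a * k + 1 : ℝ) : ℂ)) (b := b)
      (by rw [Complex.ofReal_re]; positivity) (by rw [hbre]; exact hc)
    have hpow : (1 / b) ^ ((a * k + 1 : ℝ) : ℂ) =
        Complex.exp (((a * k + 1 : ℝ) : ℂ) * (η * Complex.I)) := by
      rw [hinv, Complex.cpow_def_of_ne_zero (Complex.exp_ne_zero _), Complex.log_exp, mul_comm]
      · simp; linarith [pi_pos]
      · simp; exact hηlt.le
    rw [hpow, Complex.Gamma_ofReal] at hGam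
    have hinner : ∫ r in Ioi (0 : ℝ), -b * (Complex.exp (-(b * r)) *
        ((y * w * ((r ^ a : ℝ) : ℂ)) ^ k / (k.factorial : ℂ))) =
        ∫ r in Ioi (0 : ℝ), (-b * ((y : ℂ) * w) ^ k / (k.factorial : ℂ)) *
          ((r : ℂ) ^ (((a * k + 1 : ℝ) : ℂ) - 1) * Complex.exp (-(b * r))) := by
      refine setIntegral_congr_fun measurableSet_Ioi fun r hr => ?_
      have hr' : 0 < r := hr
      have : (r : ℂ) ^ (((a * k + 1 : ℝ) : ℂ) - 1) = ((r ^ a : ℝ) : ℂ) ^ k := by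
        rw [← Complex.ofReal_one, ← Complex.ofReal_sub, ← Complex.ofReal_cpow hr'.le,
          add_sub_cancel_right, rpow_mul_natCast hr'.le, Complex.ofReal_pow]
      simp only [this]
      ring
    rw [hinner, MeasureTheory.integral_const_mul, hGam, mul_pow, hw, ← Complex.exp_nat_mul, hb]
    have hexp2 : Complex.exp (↑(π * (a * k)) * Complex.I) =
        Complex.exp (-(η * Complex.I)) * Complex.exp (k * (η * Complex.I)) *
          Complex.exp (((a * k + 1 : ℝ) : ℂ) * (η * Complex.I)) := by
      rw [← Complex.exp_add, ← Complex.exp_add]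
      congr 1
      have : π * (a * k) = -η + k * η + (a * k + 1) * η := by
        rw [hη]
        field_simp
        ring
      rw [this]
      push_cast
      ring
    rw [hexp2]
    push_cast
    ring
  · have := integrableOn_exp_neg_mul_add_mul_rpow ha ha1 hc |y|
    refine (integrableOn_congr_fun (fun r hr => ?_) measurableSet_Ioi).1 this
    rw [((hrexp (|y| * |r ^ a|)).mul_left (rexp (-(c * r)))).tsum_eq, ← exp_add,
      abs_of_nonneg (rpow_nonneg (mem_Ioi.1 hr).le a)]
  · refine Eventually.of_forall fun r => ?_
    have := ((hexp (y * w * ((r ^ a : ℝ) : ℂ))).mul_left (Complex.exp (-(b * r)))).mul_left (-b)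
    rwa [← Complex.exp_add] at this

theorem hasSum_wright {a : ℝ} (ha : 0 < a) (ha1 : a < 1) (y : ℝ) :
    HasSum (fun k : ℕ => y ^ k / (k.factorial * Gamma (0 - a * k)))
      (1 / π * (∫ r in Ioi 0, wrightKernel a y r).im) := by
  have h := (Complex.hasSum_im (hasSum_integral_wrightKernel ha ha1 y)).mul_left (1 / π)
  convert! h using 2 with k
  rw [Complex.neg_im, Complex.im_ofReal_mul, Complex.exp_ofReal_mul_I_im]
  have hrefl := Real.Gamma_mul_Gamma_one_sub (0 - a * k)
  have hG : Gamma (a * k + 1) ≠ 0 := (Gamma_pos_of_pos (by positivity)).ne'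
  rw [show 1 - (0 - a * (k : ℝ)) = a * k + 1 by ring,
    show π * (0 - a * (k : ℝ)) = -(π * (a * k)) by ring, sin_neg] at hrefl
  have hG' : Gamma (0 - a * k) = π / -sin (π * (a * k)) / Gamma (a * k + 1) := by
    rw [← hrefl]; field_simp
  rw [hG']
  have hpi := pi_ne_zero
  have hk : (k.factorial : ℝ) ≠ 0 := by positivity
  by_cases hs : sin (π * (a * k)) = 0
  · simp [hs]
  · field_simp

theorem wrightW_zero_eq {a : ℝ} (ha : 0 < a) (ha1 : a < 1) (y : ℝ) :
    wrightW a 0 y = 1 / π * (∫ r in Ioi 0, wrightKernel a y r).im :=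
  (hasSum_wright ha ha1 y).tsum_eq

theorem measurable_wrightW_zero {a : ℝ} (ha : 0 < a) (ha1 : a < 1) : Measurable (wrightW a 0) := by
  refine measurable_of_tendsto_metrizable (f := fun (n : ℕ) y =>
    ∑ k ∈ Finset.range n, y ^ k / (k.factorial * Gamma (0 - a * k))) (fun n => by fun_prop) ?_
  refine tendsto_pi_nhds.2 fun y => ?_
  exact (hasSum_wright ha ha1 y).summable.hasSum.tendsto_sum_nat

theorem norm_cexp_sub_one_le_of_re_nonpos {z : ℂ} (hz : z.re ≤ 0) :
    ‖Complex.exp z - 1‖ ≤ 2 * ‖z‖ := by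
  rcases le_total ‖z‖ 1 with h | h
  · exact Complex.norm_exp_sub_one_le h
  · refine (norm_sub_le _ _).trans ?_
    rw [Complex.norm_exp, norm_one]
    linarith [exp_le_one_iff.2 hz]

theorem abs_wrightW_zero_le {a : ℝ} (ha : 0 < a) (ha1 : a < 1) :
    ∃ C > 0, ∀ z > 0, |wrightW a 0 (-z)| ≤ C * z ∧ |wrightW a 0 (-z)| ≤ C * z ^ (-1 / a) := by
  have hc := cos_wrightAngle_pos ha ha1
  set c := cos (π * a / (1 + a)) with hcdef
  have hint : IntegrableOn (fun r : ℝ => r ^ a * rexp (-(c * r))) (Ioi 0) := by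
    have := integrableOn_rpow_mul_exp_neg_mul_rpow (p := 1) (s := a) (by linarith) one_pos hc
    simpa only [rpow_one, neg_mul] using this
  have hD : 0 ≤ ∫ r in Ioi 0, r ^ a * rexp (-(c * r)) :=
    setIntegral_nonneg measurableSet_Ioi fun r hr => by
      have : 0 < r := hr
      positivity
  set D := ∫ r in Ioi 0, r ^ a * rexp (-(c * r))
  have hG : 0 < Gamma (1 / a + 1) := Gamma_pos_of_pos (by positivity)
  have hpi := pi_pos
  have him0 : (∫ r in Ioi 0, wrightKernel a 0 r).im = 0 := by
    have h0 : wrightW a 0 0 = 0 := by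
      rw [wrightW]
      refine (tsum_congr fun k => ?_).trans tsum_zero
      rcases eq_or_ne k 0 with rfl | hk
      · simp
      · simp [hk]
    rw [wrightW_zero_eq ha ha1] at h0
    exact (mul_eq_zero.1 h0).resolve_left (by positivity)
  refine ⟨1 / π * (2 * D) + 1 / π * (c ^ (-1 / a) * Gamma (1 / a + 1)), by positivity,
    fun z hz => ⟨?_, ?_⟩⟩
  · have h1 : |wrightW a 0 (-z)| ≤ 1 / π * (2 * D * z) := by
      rw [wrightW_zero_eq ha ha1, abs_mul, abs_of_pos (by positivity)]
      gcongr
      have hsub : (∫ r in Ioi 0, wrightKernel a (-z) r).im =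
          ((∫ r in Ioi 0, wrightKernel a (-z) r) - ∫ r in Ioi 0, wrightKernel a 0 r).im := by
        rw [Complex.sub_im, him0, sub_zero]
      rw [hsub, ← MeasureTheory.integral_sub (integrableOn_wrightKernel ha ha1 _)
        (integrableOn_wrightKernel ha ha1 _)]
      refine (Complex.abs_im_le_norm _).trans ?_
      refine (MeasureTheory.norm_integral_le_of_norm_le (hint.const_mul (2 * z)) ?_).trans_eq ?_
      · filter_upwards [ae_restrict_mem measurableSet_Ioi] with r hr
        have hr' : 0 < r := hr
        have hfac : wrightKernel a (-z) r - wrightKernel a 0 r = wrightKernel a 0 r *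
            (Complex.exp (↑(-z) * Complex.exp (↑(π * a / (1 + a)) * Complex.I) *
              ((r ^ a : ℝ) : ℂ)) - 1) := by
          simp only [wrightKernel, Complex.exp_add, Complex.ofReal_zero, zero_mul,
            Complex.exp_zero]
          ring
        rw [hfac, norm_mul, norm_wrightKernel]
        have h2 := norm_cexp_sub_one_le_of_re_nonpos
          (z := ↑(-z) * Complex.exp (↑(π * a / (1 + a)) * Complex.I) * ((r ^ a : ℝ) : ℂ)) (by
            rw [Complex.re_mul_ofReal, Complex.re_ofReal_mul, re_cexp_wrightAngle]
            have : 0 < z * cos (π * a / (1 + a)) * r ^ a := by positivity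
            linarith)
        rw [norm_mul, norm_mul, Complex.norm_exp_ofReal_mul_I, Complex.norm_real,
          Complex.norm_real, norm_neg, norm_of_nonneg hz.le, norm_of_nonneg (by positivity)] at h2
        calc _ ≤ rexp (-(cos (π * a / (1 + a)) * r) + 0 * cos (π * a / (1 + a)) * r ^ a) *
              (2 * (z * 1 * r ^ a)) := by gcongr
          _ = _ := by
            rw [zero_mul, zero_mul, add_zero]
            ring
      · rw [MeasureTheory.integral_const_mul]
        ring
    refine h1.trans ?_
    rw [add_mul]
    have : 0 ≤ 1 / π * (c ^ (-1 / a) * Gamma (1 / a + 1)) * z := by positivity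
    linarith
  · have h1 : |wrightW a 0 (-z)| ≤ 1 / π * (c ^ (-1 / a) * Gamma (1 / a + 1)) * z ^ (-1 / a) := by
      rw [wrightW_zero_eq ha ha1, abs_mul, abs_of_pos (by positivity), mul_assoc]
      gcongr
      refine (Complex.abs_im_le_norm _).trans ?_
      have hI : IntegrableOn (fun r : ℝ => rexp (-(z * c) * r ^ a)) (Ioi 0) := by
        simpa using integrableOn_rpow_mul_exp_neg_mul_rpow (p := a) (s := 0) (by norm_num) ha
          (mul_pos hz hc)
      refine (MeasureTheory.norm_integral_le_of_norm_le hI ?_).trans_eq ?_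
      · filter_upwards [ae_restrict_mem measurableSet_Ioi] with r hr
        have hr' : 0 < r := hr
        rw [norm_wrightKernel, exp_le_exp]
        have : 0 < c * r := by positivity
        linarith
      · rw [integral_exp_neg_mul_rpow ha (by positivity), mul_rpow hz.le hc.le]
        ring
    refine h1.trans ?_
    rw [add_mul]
    have : 0 ≤ 1 / π * (2 * D) * z ^ (-1 / a) := by positivity
    linarith

/-- A minimum of two powers, integrable at `0` and at `∞` respectively, split at `c`. -/
theorem integral_min_rpow_le {β γ P Q c : ℝ} (hβ : -1 < β) (hγ : γ < -1) (hP : 0 ≤ P)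
    (hQ : 0 ≤ Q) (hc : 0 < c) :
    IntegrableOn (fun t : ℝ => min (P * t ^ β) (Q * t ^ γ)) (Ioi 0) ∧
      ∫ t in Ioi 0, min (P * t ^ β) (Q * t ^ γ) ≤
        P * (c ^ (β + 1) / (β + 1)) + Q * (-c ^ (γ + 1) / (γ + 1)) := by
  have hmeas : Measurable (fun t : ℝ => min (P * t ^ β) (Q * t ^ γ)) := by fun_prop
  have hb : ∀ t > 0, 0 ≤ min (P * t ^ β) (Q * t ^ γ) := fun t ht =>
    le_min (by have := rpow_nonneg (le_of_lt ht) β; positivity)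
      (by have := rpow_nonneg (le_of_lt ht) γ; positivity)
  have hI1 : IntegrableOn (fun t : ℝ => P * t ^ β) (Ioc 0 c) :=
    ((intervalIntegrable_iff_integrableOn_Ioc_of_le hc.le).1
      (intervalIntegral.intervalIntegrable_rpow' hβ)).const_mul P
  have hI2 : IntegrableOn (fun t : ℝ => Q * t ^ γ) (Ioi c) :=
    (integrableOn_Ioi_rpow_of_lt hγ hc).const_mul Q
  have hJ1 : IntegrableOn (fun t : ℝ => min (P * t ^ β) (Q * t ^ γ)) (Ioc 0 c) := by
    refine hI1.mono' hmeas.aestronglyMeasurable ?_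
    filter_upwards [ae_restrict_mem measurableSet_Ioc] with t ht
    rw [norm_of_nonneg (hb t ht.1)]
    exact min_le_left _ _
  have hJ2 : IntegrableOn (fun t : ℝ => min (P * t ^ β) (Q * t ^ γ)) (Ioi c) := by
    refine hI2.mono' hmeas.aestronglyMeasurable ?_
    filter_upwards [ae_restrict_mem measurableSet_Ioi] with t ht
    rw [norm_of_nonneg (hb t (hc.trans ht))]
    exact min_le_right _ _
  rw [← Ioc_union_Ioi_eq_Ioi hc.le]
  refine ⟨hJ1.union hJ2, ?_⟩
  rw [setIntegral_union (Ioc_disjoint_Ioi le_rfl) measurableSet_Ioi hJ1 hJ2]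
  refine add_le_add ((setIntegral_mono hJ1 hI1 fun t => min_le_left _ _).trans_eq ?_)
    ((setIntegral_mono hJ2 hI2 fun t => min_le_right _ _).trans_eq ?_)
  · rw [MeasureTheory.integral_const_mul, ← intervalIntegral.integral_of_le hc.le,
      integral_rpow (Or.inl hβ), zero_rpow (by linarith), sub_zero]
  · rw [MeasureTheory.integral_const_mul, integral_Ioi_rpow_of_lt hγ hc]

/-- The profile of the one-sided `a`-stable density at scale `p`: its value near `0`
and its tail. -/
noncomputable def stableProfile (a p t : ℝ) : ℝ := min (p ^ (-1 / a)) (p * t ^ (-a - 1))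

theorem stableProfile_nonneg {a p t : ℝ} (hp : 0 < p) (ht : 0 < t) : 0 ≤ stableProfile a p t :=
  le_min (by positivity) (by positivity)

theorem integral_stableProfile_le {a p : ℝ} (ha : 0 < a) (hp : 0 < p) :
    IntegrableOn (stableProfile a p) (Ioi 0) ∧
      ∫ t in Ioi 0, stableProfile a p t ≤ 1 + 1 / a := by
  have h := integral_min_rpow_le (β := 0) (γ := -a - 1) (P := p ^ (-1 / a)) (Q := p)
    (c := p ^ (1 / a)) (by norm_num) (by linarith) (by positivity) hp.le (by positivity)
  simp only [rpow_zero, mul_one] at h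
  refine ⟨h.1, h.2.trans_eq ?_⟩
  have h1 : p ^ (-1 / a) * (p ^ (1 / a)) = 1 := by
    rw [← rpow_add hp, neg_div, neg_add_cancel, rpow_zero]
  have h2 : (p ^ (1 / a)) ^ (-a) = p⁻¹ := by
    rw [← rpow_mul hp.le, ← rpow_neg_one]
    congr 1
    field_simp
  rw [zero_add, rpow_one, div_one, h1, show -a - 1 + 1 = -a by ring, h2]
  field_simp

theorem integral_stableProfile_Ioo_le {a p : ℝ} (ha : 0 < a) (hp : 0 < p) (t : ℝ) :
    ∫ τ in Ioo 0 t, stableProfile a p τ ≤ 1 + 1 / a := by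
  have h := integral_stableProfile_le ha hp
  refine (setIntegral_mono_set h.1 ?_ (Ioo_subset_Ioi_self.eventuallyLE)).trans h.2
  filter_upwards [ae_restrict_mem measurableSet_Ioi] with τ hτ
  exact stableProfile_nonneg hp hτ

theorem integral_stableProfile_reflect_le {a p t : ℝ} (ha : 0 < a) (hp : 0 < p) (ht : 0 < t) :
    IntegrableOn (fun τ => stableProfile a p (t - τ)) (Ioo 0 t) ∧
      ∫ τ in Ioo 0 t, stableProfile a p (t - τ) ≤ 1 + 1 / a := by
  have h := integral_stableProfile_le ha hp
  have hi : IntervalIntegrable (stableProfile a p) volume 0 t :=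
    (intervalIntegrable_iff_integrableOn_Ioc_of_le ht.le).2 (h.1.mono_set Ioc_subset_Ioi_self)
  constructor
  · have := (hi.comp_sub_left t).symm
    simp only [sub_zero, sub_self] at this
    exact ((intervalIntegrable_iff_integrableOn_Ioc_of_le ht.le).1 this).mono_set
      Ioo_subset_Ioc_self
  · rw [← integral_Ioc_eq_integral_Ioo, ← intervalIntegral.integral_of_le ht.le,
      intervalIntegral.integral_comp_sub_left (stableProfile a p) t, sub_zero, sub_self,
      intervalIntegral.integral_of_le ht.le, integral_Ioc_eq_integral_Ioo]
    exact integral_stableProfile_Ioo_le ha hp t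

theorem stableProfile_le_of_half_le {a p t τ : ℝ} (ha : 0 < a) (hp : 0 < p) (ht : 0 < t)
    (hτ : t / 2 ≤ τ) : stableProfile a p τ ≤ 2 ^ (a + 1) * (p * t ^ (-a - 1)) := by
  refine (min_le_right _ _).trans ?_
  have h1 : τ ^ (-a - 1) ≤ (t / 2) ^ (-a - 1) :=
    rpow_le_rpow_of_nonpos (by positivity) hτ (by linarith)
  have h2 : (t / 2) ^ (-a - 1) = 2 ^ (a + 1) * t ^ (-a - 1) := by
    rw [div_rpow ht.le two_pos.le, div_eq_mul_inv, ← rpow_neg two_pos.le, mul_comm]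
    congr 2
    ring
  rw [h2] at h1
  calc p * τ ^ (-a - 1) ≤ p * (2 ^ (a + 1) * t ^ (-a - 1)) := by gcongr
    _ = _ := by ring

/-- Convolving functions with stable profiles of orders `a ≤ b` gives one with a stable profile
of order `b`, locally in time and uniformly in the scale. -/
theorem abs_laplaceConv_le_s19 {a b A B T p : ℝ} (ha : 0 < a) (hab : a ≤ b) (hA : 0 < A) (hB : 0 < B)
    (hp : 0 < p) {f g : ℝ → ℝ}
    (hf : ∀ t ∈ Ioc 0 T, |f t| ≤ A * stableProfile a p t)
    (hg : ∀ t ∈ Ioc 0 T, |g t| ≤ B * stableProfile b p t) {t : ℝ} (ht : t ∈ Ioc 0 T) :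
    |laplaceConv f g t| ≤ A * B * ((1 + 1 / a) + (2 ^ (b + 1) * (1 + 1 / a) +
      2 ^ (a + 1) * T ^ (b - a) * (1 + 1 / b))) * stableProfile b p t := by
  obtain ⟨ht0, htT⟩ := ht
  have hb : 0 < b := ha.trans_le hab
  have hT : 0 < T := ht0.trans_le htT
  have hF := (integral_stableProfile_le ha hp).1.mono_set
    (Ioo_subset_Ioi_self : Ioo 0 t ⊆ Ioi 0)
  have hFle := integral_stableProfile_Ioo_le ha hp t
  obtain ⟨hG, hGle⟩ := integral_stableProfile_reflect_le hb hp ht0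
  have hconv : laplaceConv f g t = ∫ τ in Ioo 0 t, f τ * g (t - τ) := by
    rw [laplaceConv, intervalIntegral.integral_of_le ht0.le, integral_Ioc_eq_integral_Ioo]
  have hfg : ∀ τ ∈ Ioo 0 t, ‖f τ * g (t - τ)‖ ≤
      A * stableProfile a p τ * (B * stableProfile b p (t - τ)) := by
    intro τ hτ
    rw [norm_mul]
    have h0 := stableProfile_nonneg (a := a) hp hτ.1
    exact mul_le_mul (hf τ ⟨hτ.1, by linarith [hτ.2]⟩)
      (hg (t - τ) ⟨by linarith [hτ.2], by linarith [hτ.1]⟩) (abs_nonneg _) (by positivity)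
  have hsup : |laplaceConv f g t| ≤ A * B * (1 + 1 / a) * p ^ (-1 / b) := by
    rw [hconv, ← norm_eq_abs]
    refine (MeasureTheory.norm_integral_le_of_norm_le
      (hF.const_mul (A * B * p ^ (-1 / b))) ?_).trans ?_
    · filter_upwards [ae_restrict_mem measurableSet_Ioo] with τ hτ
      have h0 := stableProfile_nonneg (a := a) hp hτ.1
      have h1 : stableProfile b p (t - τ) ≤ p ^ (-1 / b) := min_le_left _ _
      calc _ ≤ _ := hfg τ hτ
        _ ≤ A * stableProfile a p τ * (B * p ^ (-1 / b)) := by gcongr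
        _ = _ := by ring
    · rw [MeasureTheory.integral_const_mul]
      calc _ ≤ A * B * p ^ (-1 / b) * (1 + 1 / a) := by gcongr
        _ = _ := by ring
  have htail : |laplaceConv f g t| ≤ A * B * (2 ^ (b + 1) * (1 + 1 / a) +
      2 ^ (a + 1) * T ^ (b - a) * (1 + 1 / b)) * (p * t ^ (-b - 1)) := by
    rw [hconv, ← norm_eq_abs]
    refine (MeasureTheory.norm_integral_le_of_norm_le
      ((hF.const_mul (A * B * (2 ^ (b + 1) * (p * t ^ (-b - 1))))).add
        (hG.const_mul (A * B * (2 ^ (a + 1) * (p * t ^ (-a - 1)))))) ?_).trans ?_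
    · filter_upwards [ae_restrict_mem measurableSet_Ioo] with τ hτ
      have h0 := stableProfile_nonneg (a := a) hp hτ.1
      have h1 := stableProfile_nonneg (a := b) hp (sub_pos.2 hτ.2)
      refine (hfg τ hτ).trans ?_
      rcases le_total τ (t / 2) with h | h
      · have h2 := stableProfile_le_of_half_le hb hp ht0 (τ := t - τ) (by linarith)
        calc _ ≤ A * stableProfile a p τ * (B * (2 ^ (b + 1) * (p * t ^ (-b - 1)))) := by gcongr
          _ = A * B * (2 ^ (b + 1) * (p * t ^ (-b - 1))) * stableProfile a p τ := by ring
          _ ≤ _ := le_add_of_nonneg_right (by positivity)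
      · have h2 := stableProfile_le_of_half_le ha hp ht0 h
        calc _ ≤ A * (2 ^ (a + 1) * (p * t ^ (-a - 1))) * (B * stableProfile b p (t - τ)) := by
              gcongr
          _ = A * B * (2 ^ (a + 1) * (p * t ^ (-a - 1))) * stableProfile b p (t - τ) := by ring
          _ ≤ _ := le_add_of_nonneg_left (by positivity)
    · simp only [Pi.add_apply]
      rw [MeasureTheory.integral_add (hF.const_mul _) (hG.const_mul _),
        MeasureTheory.integral_const_mul, MeasureTheory.integral_const_mul]
      have h3 : t ^ (-a - 1) ≤ T ^ (b - a) * t ^ (-b - 1) := by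
        rw [show -a - 1 = (b - a) + (-b - 1) by ring, rpow_add ht0]
        gcongr
      calc _ ≤ A * B * (2 ^ (b + 1) * (p * t ^ (-b - 1))) * (1 + 1 / a) +
            A * B * (2 ^ (a + 1) * (p * t ^ (-a - 1))) * (1 + 1 / b) := by gcongr
        _ ≤ A * B * (2 ^ (b + 1) * (p * t ^ (-b - 1))) * (1 + 1 / a) +
            A * B * (2 ^ (a + 1) * (p * (T ^ (b - a) * t ^ (-b - 1)))) * (1 + 1 / b) := by gcongr
        _ = _ := by ring
  rw [stableProfile, mul_min_of_nonneg _ _ (by positivity)]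
  refine le_min (hsup.trans ?_) (htail.trans ?_) <;>
    refine mul_le_mul_of_nonneg_right (mul_le_mul_of_nonneg_left ?_ (by positivity))
      (by positivity)
  · exact le_add_of_nonneg_right (by positivity)
  · exact le_add_of_nonneg_left (by positivity)

theorem exists_abs_iterConv_le_s19 {T : ℝ} (hT : 0 < T) (n : ℕ) : ∀ (α : Fin (n + 1) → ℝ)
    (h : Fin (n + 1) → ℝ → ℝ → ℝ), Monotone α → (∀ j, 0 < α j) →
    (∀ j, ∃ A > 0, ∀ p > 0, ∀ t ∈ Ioc 0 T, |h j p t| ≤ A * stableProfile (α j) p t) →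
    ∃ A > 0, ∀ p > 0, ∀ t ∈ Ioc 0 T,
      |iterConv n (fun j => h j p) t| ≤ A * stableProfile (α (Fin.last n)) p t := by
  induction n with
  | zero => exact fun α h _ _ hh => hh 0
  | succ n ih =>
    intro α h hα hpos hh
    obtain ⟨A, hA, hfA⟩ := ih (fun i => α i.castSucc) (fun i => h i.castSucc)
      (fun i j hij => hα (Fin.castSucc_le_castSucc_iff.2 hij)) (fun i => hpos _) (fun i => hh _)
    obtain ⟨B, hB, hgB⟩ := hh (Fin.last (n + 1))
    have ha := hpos (Fin.last n).castSucc
    have hb := hpos (Fin.last (n + 1))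
    exact ⟨_, by positivity, fun p hp t ht =>
      abs_laplaceConv_le_s19 ha (hα (Fin.le_last _)) hA hB hp (hfA p hp) (hgB p hp) ht⟩

theorem measurable_laplaceConv {f g : ℝ → ℝ → ℝ} (hf : Measurable (Function.uncurry f))
    (hg : Measurable (Function.uncurry g)) :
    Measurable (Function.uncurry fun p t => laplaceConv (f p) (g p) t) := by
  have hF : Measurable fun q : (ℝ × ℝ) × ℝ => f q.1.1 q.2 * g q.1.1 (q.1.2 - q.2) :=
    (hf.comp (by fun_prop : Measurable fun q : (ℝ × ℝ) × ℝ => (q.1.1, q.2))).mul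
      (hg.comp (by fun_prop : Measurable fun q : (ℝ × ℝ) × ℝ => (q.1.1, q.1.2 - q.2)))
  have key : ∀ S : Set ((ℝ × ℝ) × ℝ), MeasurableSet S → Measurable fun q : ℝ × ℝ =>
      ∫ τ, S.indicator (fun q : (ℝ × ℝ) × ℝ => f q.1.1 q.2 * g q.1.1 (q.1.2 - q.2)) (q, τ) :=
    fun S hS => ((hF.indicator hS).stronglyMeasurable.integral_prod_right').measurable
  have h1 := key {q | 0 < q.2 ∧ q.2 ≤ q.1.2}
    ((measurableSet_lt measurable_const measurable_snd).inter
      (measurableSet_le measurable_snd (measurable_snd.comp measurable_fst)))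
  have h2 := key {q | q.1.2 < q.2 ∧ q.2 ≤ 0}
    ((measurableSet_lt (measurable_snd.comp measurable_fst) measurable_snd).inter
      (measurableSet_le measurable_snd measurable_const))
  convert! h1.sub h2 using 1
  funext ⟨p, t⟩
  simp only [Function.uncurry_apply_pair, laplaceConv, intervalIntegral,
    ← MeasureTheory.integral_indicator measurableSet_Ioc]
  rfl

theorem measurable_iterConv (n : ℕ) : ∀ h : Fin (n + 1) → ℝ → ℝ → ℝ,
    (∀ j, Measurable (Function.uncurry (h j))) →
    Measurable (Function.uncurry fun p t => iterConv n (fun j => h j p) t) := by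
  induction n with
  | zero => exact fun h hh => hh 0
  | succ n ih => exact fun h hh => measurable_laplaceConv (ih _ fun i => hh i.castSucc) (hh _)

theorem exists_abs_wrightDensity_le {a l : ℝ} (ha : 0 < a) (ha1 : a < 1) (hl : 0 < l) :
    ∃ A > 0, ∀ p > 0, ∀ t > 0,
      |t ^ (0 - 1 : ℝ) * wrightW a 0 (-(l * p) * t ^ (-a))| ≤ A * stableProfile a p t := by
  obtain ⟨C, hC, hW⟩ := abs_wrightW_zero_le ha ha1
  refine ⟨C * (l ^ (-1 / a) + l), by positivity, fun p hp t ht => ?_⟩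
  obtain ⟨h1, h2⟩ := hW (l * p * t ^ (-a)) (by positivity)
  rw [stableProfile, mul_min_of_nonneg _ _ (by positivity), abs_mul,
    abs_of_pos (by positivity : 0 < t ^ (0 - 1 : ℝ)), neg_mul]
  refine le_min ?_ ?_
  · have h3 : (t ^ (-a)) ^ (-1 / a) = t := by
      rw [← rpow_mul ht.le]
      have : -a * (-1 / a) = 1 := by field_simp
      rw [this, rpow_one]
    have h4 : t ^ (0 - 1 : ℝ) * t = 1 := by
      rw [zero_sub, rpow_neg_one, inv_mul_cancel₀ ht.ne']
    rw [mul_rpow (by positivity) (by positivity), mul_rpow hl.le hp.le, h3] at h2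
    calc _ ≤ t ^ (0 - 1 : ℝ) * (C * (l ^ (-1 / a) * p ^ (-1 / a) * t)) := by gcongr
      _ = C * l ^ (-1 / a) * p ^ (-1 / a) * (t ^ (0 - 1 : ℝ) * t) := by ring
      _ = C * (l ^ (-1 / a) + 0) * p ^ (-1 / a) := by rw [h4]; ring
      _ ≤ _ := by gcongr
  · have h3 : t ^ (-a - 1) = t ^ (0 - 1 : ℝ) * t ^ (-a) := by
      rw [← rpow_add ht]
      congr 1
      ring
    calc _ ≤ t ^ (0 - 1 : ℝ) * (C * (l * p * t ^ (-a))) := by gcongr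
      _ = C * (0 + l) * (p * t ^ (-a - 1)) := by rw [h3]; ring
      _ ≤ _ := by gcongr; positivity

theorem measurable_wrightDensity {a : ℝ} (ha : 0 < a) (ha1 : a < 1) (l : ℝ) :
    Measurable (Function.uncurry fun p t : ℝ =>
      t ^ (0 - 1 : ℝ) * wrightW a 0 (-(l * p) * t ^ (-a))) := by
  refine Measurable.mul (by fun_prop) ((measurable_wrightW_zero ha ha1).comp ?_)
  fun_prop

theorem Sconv_zero_eq (n : ℕ) (α l : Fin (n + 1) → ℝ) :
    Sconv n 0 α l = iterConv n (fun j t =>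
      t ^ (0 - 1 : ℝ) * wrightW (α j) 0 (-(l j) * t ^ (-(α j)))) := by
  simp only [Sconv, ite_self]

theorem measurable_Sconv_zero {n : ℕ} {α : Fin (n + 1) → ℝ} (hpos : ∀ j, 0 < α j)
    (hlt1 : ∀ j, α j < 1) (lam : Fin (n + 1) → ℝ) :
    Measurable (Function.uncurry fun p t => Sconv n 0 α (fun j => lam j * p) t) := by
  simp only [Sconv_zero_eq]
  exact measurable_iterConv n (fun j p t =>
    t ^ (0 - 1 : ℝ) * wrightW (α j) 0 (-(lam j * p) * t ^ (-(α j))))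
    fun j => measurable_wrightDensity (hpos j) (hlt1 j) (lam j)

theorem exists_abs_Sconv_zero_le {n : ℕ} {α lam : Fin (n + 1) → ℝ} (hα : Monotone α)
    (hpos : ∀ j, 0 < α j) (hlt1 : ∀ j, α j < 1) (hlam : ∀ j, 0 < lam j) {T : ℝ} (hT : 0 < T) :
    ∃ A > 0, ∀ p > 0, ∀ t ∈ Ioc 0 T,
      |Sconv n 0 α (fun j => lam j * p) t| ≤ A * stableProfile (α (Fin.last n)) p t := by
  simp only [Sconv_zero_eq]
  refine exists_abs_iterConv_le_s19 hT n α (fun j p t =>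
    t ^ (0 - 1 : ℝ) * wrightW (α j) 0 (-(lam j * p) * t ^ (-(α j)))) hα hpos fun j => ?_
  obtain ⟨A, hA, h⟩ := exists_abs_wrightDensity_le (hpos j) (hlt1 j) (hlam j)
  exact ⟨A, hA, fun p hp t ht => h p hp t ht.1⟩

theorem measurable_kerE {n : ℕ} {α : Fin (n + 1) → ℝ} (hpos : ∀ j, 0 < α j)
    (hlt1 : ∀ j, α j < 1) (lam : Fin (n + 1) → ℝ) :
    Measurable (Function.uncurry (kerE n α lam)) := by
  have hS := measurable_Sconv_zero hpos hlt1 lam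
  have hF : Measurable fun q : (ℝ × ℝ) × ℝ => q.2 ^ (-(1/2 : ℝ)) *
      rexp (-(|q.1.1| ^ 2) / (4 * q.2)) * Sconv n 0 α (fun j => lam j * q.2) q.1.2 :=
    Measurable.mul (by fun_prop)
      (hS.comp (by fun_prop : Measurable fun q : (ℝ × ℝ) × ℝ => (q.2, q.1.2)))
  have hI : Measurable fun q : ℝ × ℝ => ∫ p in Ioi 0, p ^ (-(1/2 : ℝ)) *
      rexp (-(|q.1| ^ 2) / (4 * p)) * Sconv n 0 α (fun j => lam j * p) q.2 :=
    (hF.stronglyMeasurable.integral_prod_right' (ν := volume.restrict (Ioi 0))).measurable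
  exact hI.const_mul ((4 * π) ^ (-(1/2 : ℝ)))

/-- The kernel `E` is bounded by `K t ^ (α_m / 2 - 1)` uniformly in space. -/
theorem exists_abs_kerE_le {n : ℕ} {α lam : Fin (n + 1) → ℝ} (hα : Monotone α)
    (hpos : ∀ j, 0 < α j) (hlt1 : ∀ j, α j < 1) (hlam : ∀ j, 0 < lam j) {T : ℝ} (hT : 0 < T) :
    ∃ K > 0, ∀ x, ∀ t ∈ Ioc 0 T, |kerE n α lam x t| ≤ K * t ^ (α (Fin.last n) / 2 - 1) := by
  obtain ⟨A, hA, hS⟩ := exists_abs_Sconv_zero_le hα hpos hlt1 hlam hT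
  have ha := hpos (Fin.last n)
  have ha1 := hlt1 (Fin.last n)
  set a := α (Fin.last n) with hadef
  have hainv : 1 < 1 / a := by rwa [lt_div_iff₀ ha, one_mul]
  have hd : 0 < 1 / a - 1 / 2 := by linarith
  refine ⟨(4 * π) ^ (-(1/2 : ℝ)) * (A * (2 / 3 + 1 / (1 / a - 1 / 2))), by positivity,
    fun x t ht => ?_⟩
  have ht0 := ht.1
  obtain ⟨hI, hle⟩ := integral_min_rpow_le (β := 1 / 2) (γ := -1 / 2 - 1 / a)
    (P := t ^ (-a - 1)) (Q := 1) (c := t ^ a) (by norm_num) (by linarith) (by positivity)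
    zero_le_one (by positivity)
  rw [kerE, Gam1, abs_mul, abs_of_pos (by positivity : 0 < (4 * π) ^ (-(1/2 : ℝ))), mul_assoc]
  refine mul_le_mul_of_nonneg_left ?_ (by positivity)
  rw [← norm_eq_abs]
  refine (MeasureTheory.norm_integral_le_of_norm_le (hI.const_mul A) ?_).trans ?_
  · filter_upwards [ae_restrict_mem measurableSet_Ioi] with p hp
    have hp' : 0 < p := hp
    have h1 : rexp (-(|x| ^ 2) / (4 * p)) ≤ 1 := by
      rw [exp_le_one_iff, neg_div]
      exact neg_nonpos.2 (by positivity)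
    have h0 := stableProfile_nonneg (a := a) hp' ht0
    rw [norm_mul, norm_mul, norm_of_nonneg (by positivity : 0 ≤ p ^ (-(1/2 : ℝ))),
      norm_of_nonneg (exp_pos _).le]
    calc _ ≤ p ^ (-(1/2 : ℝ)) * 1 * (A * stableProfile a p t) := by
          gcongr
          exact hS p hp' t ht
      _ = A * (p ^ (-(1/2 : ℝ)) * stableProfile a p t) := by ring
      _ = _ := by
        rw [stableProfile, mul_min_of_nonneg _ _ (by positivity), min_comm]
        congr 2
        · rw [show (1 / 2 : ℝ) = -(1 / 2) + 1 by norm_num, rpow_add_one hp'.ne']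
          norm_num
          ring
        · rw [← rpow_add hp', one_mul]
          congr 1
          ring
  · rw [MeasureTheory.integral_const_mul, mul_assoc]
    gcongr
    refine hle.trans_eq ?_
    have h1 : t ^ (-a - 1) * (t ^ a) ^ (1 / 2 + 1 : ℝ) = t ^ (a / 2 - 1) := by
      rw [← rpow_mul ht0.le, ← rpow_add ht0]
      congr 1
      ring
    have h2 : (t ^ a) ^ (-1 / 2 - 1 / a + 1) = t ^ (a / 2 - 1) := by
      rw [← rpow_mul ht0.le]
      congr 1
      field_simp
      ring
    rw [h2, ← mul_div_assoc, h1, one_mul, neg_div, ← div_neg,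
      show -(-1 / 2 - 1 / a + 1) = 1 / a - 1 / 2 by ring]
    ring

/-- The Euler Beta integral on `(0, t)`. -/
theorem integral_rpow_mul_sub_rpow {u v t : ℝ} (hu : 0 < u) (hv : 0 < v) (ht : 0 < t) :
    ∫ τ in Ioo 0 t, τ ^ (u - 1) * (t - τ) ^ (v - 1) =
      t ^ (u + v - 1) * (Gamma u * Gamma v / Gamma (u + v)) := by
  have h := Complex.betaIntegral_scaled u v ht
  rw [Complex.betaIntegral_eq_Gamma_mul_div _ _ (by simpa) (by simpa),
    intervalIntegral.integral_of_le ht.le, integral_Ioc_eq_integral_Ioo] at h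
  have hcongr : ∫ τ in Ioo 0 t, (τ : ℂ) ^ ((u : ℂ) - 1) * ((t : ℂ) - τ) ^ ((v : ℂ) - 1) =
      ∫ τ in Ioo 0 t, ((τ ^ (u - 1) * (t - τ) ^ (v - 1) : ℝ) : ℂ) := by
    refine setIntegral_congr_fun measurableSet_Ioo fun τ hτ => ?_
    rw [Complex.ofReal_mul, Complex.ofReal_cpow hτ.1.le, Complex.ofReal_cpow (sub_pos.2 hτ.2).le]
    push_cast
    rfl
  rw [hcongr, integral_complex_ofReal] at h
  apply Complex.ofReal_injective
  rw [h, Complex.ofReal_mul, Complex.ofReal_cpow ht.le, Complex.ofReal_div, Complex.ofReal_mul,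
    ← Complex.Gamma_ofReal, ← Complex.Gamma_ofReal, ← Complex.Gamma_ofReal]
  push_cast
  rfl

theorem integrableOn_rpow_mul_sub_rpow {u v t : ℝ} (hu : 0 < u) (hv : 0 < v) (ht : 0 < t) :
    IntegrableOn (fun τ => τ ^ (u - 1) * (t - τ) ^ (v - 1)) (Ioo 0 t) := by
  by_contra hcon
  have h := integral_rpow_mul_sub_rpow hu hv ht
  rw [integral_undef hcon] at h
  have := Gamma_pos_of_pos hu
  have := Gamma_pos_of_pos hv
  have := Gamma_pos_of_pos (add_pos hu hv)
  have : 0 < t ^ (u + v - 1) * (Gamma u * Gamma v / Gamma (u + v)) := by positivity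
  linarith

/-- Integrability of the `E`-potential integrand, with the explicit bound
`∫₀ᵗ |φ(τ) E(x - s(τ), t - τ)| dτ ≤
  C ⋅ sup_{τ∈(0,T)} |τ^{1-α_m} φ(τ)| ⋅ t^{3α_m/2 - 1} B(α_m, α_m/2)`,
where `B(a,b) = Γ(a)Γ(b)/Γ(a+b)` is the Euler Beta function and `C` does not
depend on `x`, `t` or `φ`. -/
theorem E_potential_integrand_integrable
    (m : ℕ) (α lam : Fin (m + 1) → ℝ)
    (hmono : StrictMono α) (hpos : ∀ j, 0 < α j) (hlt1 : ∀ j, α j < 1)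
    (hlam : ∀ j, 0 < lam j)
    (T : ℝ) (hT : 0 < T) (s : ℝ → ℝ) (hs : ContinuousOn s (Set.Icc 0 T)) :
    ∃ C > (0:ℝ), ∀ φ : ℝ → ℝ,
      (∃ ψ : ℝ → ℝ, ContinuousOn ψ (Set.Icc 0 T) ∧
        ∀ t ∈ Set.Ioc (0:ℝ) T, ψ t = t ^ (1 - α (Fin.last m)) * φ t) →
      ∀ t ∈ Set.Ioc (0:ℝ) T, ∀ x : ℝ, x ≠ s t →
        MeasureTheory.IntegrableOn
          (fun τ => φ τ * kerE m α lam (x - s τ) (t - τ)) (Set.Ioc 0 t) ∧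
        ∫ τ in Set.Ioc (0:ℝ) t, |φ τ * kerE m α lam (x - s τ) (t - τ)| ≤
          C * (⨆ τ : Set.Ioo (0:ℝ) T, |(τ : ℝ) ^ (1 - α (Fin.last m)) * φ τ|) *
            t ^ (3 * α (Fin.last m) / 2 - 1) *
            (Real.Gamma (α (Fin.last m)) * Real.Gamma (α (Fin.last m) / 2) /
              Real.Gamma (α (Fin.last m) + α (Fin.last m) / 2)) := by
  have ha := hpos (Fin.last m)
  obtain ⟨K, hK, hE⟩ := exists_abs_kerE_le hmono.monotone hpos hlt1 hlam hT
  refine ⟨K, hK, fun φ ⟨ψ, hψ, hφψ⟩ t ht x _ => ?_⟩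
  set a := α (Fin.last m) with hadef
  set M := ⨆ τ : Set.Ioo (0:ℝ) T, |(τ : ℝ) ^ (1 - a) * φ τ| with hM
  obtain ⟨ht0, htT⟩ := ht
  have hbdd : BddAbove (Set.range fun τ : Set.Ioo (0:ℝ) T => |(τ : ℝ) ^ (1 - a) * φ τ|) := by
    obtain ⟨R, hR⟩ := isCompact_Icc.exists_bound_of_continuousOn hψ
    refine ⟨R, ?_⟩
    rintro _ ⟨τ, rfl⟩
    simp only
    rw [← hφψ τ ⟨τ.2.1, τ.2.2.le⟩]
    exact hR τ ⟨τ.2.1.le, τ.2.2.le⟩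
  have hφeq : ∀ τ ∈ Ioo 0 t, φ τ = τ ^ (a - 1) * (τ ^ (1 - a) * φ τ) := by
    intro τ hτ
    rw [← mul_assoc, ← rpow_add hτ.1, show a - 1 + (1 - a) = 0 by ring, rpow_zero, one_mul]
  have hbound : ∀ τ ∈ Ioo 0 t, |φ τ * kerE m α lam (x - s τ) (t - τ)| ≤
      M * K * (τ ^ (a - 1) * (t - τ) ^ (a / 2 - 1)) := by
    intro τ hτ
    have hτ0 : 0 < τ := hτ.1
    have h1 : |τ ^ (1 - a) * φ τ| ≤ M := le_ciSup hbdd ⟨τ, hτ.1, hτ.2.trans_le htT⟩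
    have h2 := hE (x - s τ) (t - τ) ⟨sub_pos.2 hτ.2, by linarith⟩
    have h3 : |φ τ| ≤ τ ^ (a - 1) * M := by
      rw [hφeq τ hτ, abs_mul, abs_of_pos (by positivity : 0 < τ ^ (a - 1))]
      gcongr
    rw [abs_mul]
    calc _ ≤ τ ^ (a - 1) * M * (K * (t - τ) ^ (a / 2 - 1)) :=
          mul_le_mul h3 h2 (abs_nonneg _) ((abs_nonneg _).trans h3)
      _ = _ := by ring
  have hdom : IntegrableOn (fun τ => M * K * (τ ^ (a - 1) * (t - τ) ^ (a / 2 - 1))) (Ioo 0 t) :=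
    (integrableOn_rpow_mul_sub_rpow ha (half_pos ha) ht0).const_mul _
  have hsub : Ioo 0 t ⊆ Icc 0 T := fun τ hτ => ⟨hτ.1.le, hτ.2.le.trans htT⟩
  have hφm : AEStronglyMeasurable φ (volume.restrict (Ioo 0 t)) := by
    have hc : ContinuousOn (fun τ => τ ^ (a - 1) * ψ τ) (Ioo 0 t) :=
      (continuousOn_id.rpow_const fun τ hτ => Or.inl hτ.1.ne').mul (hψ.mono hsub)
    refine (hc.aestronglyMeasurable measurableSet_Ioo).congr ?_
    filter_upwards [ae_restrict_mem measurableSet_Ioo] with τ hτ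
    rw [hφψ τ ⟨hτ.1, hτ.2.le.trans htT⟩, ← hφeq τ hτ]
  have hEm : AEStronglyMeasurable (fun τ => kerE m α lam (x - s τ) (t - τ))
      (volume.restrict (Ioo 0 t)) := by
    have hs' : AEMeasurable s (volume.restrict (Ioo 0 t)) :=
      (hs.mono hsub).aemeasurable measurableSet_Ioo
    have hpair : AEMeasurable (fun τ => (x - s τ, t - τ)) (volume.restrict (Ioo 0 t)) :=
      (aemeasurable_const.sub hs').prodMk (by fun_prop)
    exact ((measurable_kerE hpos hlt1 lam).comp_aemeasurable hpair).aestronglyMeasurable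
  have hint : IntegrableOn (fun τ => φ τ * kerE m α lam (x - s τ) (t - τ)) (Ioo 0 t) := by
    refine hdom.mono' (hφm.mul hEm) ?_
    filter_upwards [ae_restrict_mem measurableSet_Ioo] with τ hτ using hbound τ hτ
  refine ⟨(integrableOn_Ioc_iff_integrableOn_Ioo).2 hint, ?_⟩
  rw [integral_Ioc_eq_integral_Ioo]
  refine (setIntegral_mono_on hint.abs hdom measurableSet_Ioo hbound).trans_eq ?_
  rw [MeasureTheory.integral_const_mul, integral_rpow_mul_sub_rpow ha (half_pos ha) ht0,
    show a + a / 2 - 1 = 3 * a / 2 - 1 by ring]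
  ring
end
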